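/- arXiv:1111.0245 — 11 statements merged into one kernel-verified Lean document; each statement's English description precedes it below -/
import Mathlib

section
/- For a finite chain C with elements c_1 < c_2 < ... < c_n, the generating function of C-partitions satisfies f_C · ∏_{k=1}^{n} (1 − x_{c_1} x_{c_2} ⋯ x_{c_k}) = 1 as an identity of multivariate formal power series over ℤ. -/
open MvPowerSeries

open Classical in
noncomputable def pgf (α : Type*) [Fintype α] [PartialOrder α] : MvPowerSeries α ℤ :=
  fun d => if ∀ x y : α, x ≤ y → d y ≤ d x then 1 else 0

/-!
Among the partitions of a chain with greatest element `a`, those that are nonzero at `a` are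
everywhere positive, hence are exactly the translates of partitions by the all-ones vector.
Multiplying by `1 - ∏ X b` removes these translates and leaves the partitions vanishing at `a`,
which are the partitions of the chain without `a`. Induction on the chain concludes.
-/

section GeneratingSeries

variable {σ : Type*} (R : Type*)

/-- The generating series `∑ d ∈ S, X ^ d` of a set `S` of exponent vectors, given by its family
of coefficients. -/
noncomputable def generatingSeries [Zero R] [One R] (S : Set (σ →₀ ℕ)) : MvPowerSeries σ R :=
  S.indicator 1

theorem coeff_generatingSeries [Semiring R] (S : Set (σ →₀ ℕ)) (d : σ →₀ ℕ) :
    coeff d (generatingSeries R S) = S.indicator 1 d :=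
  rfl

theorem generatingSeries_singleton_zero [Semiring R] :
    generatingSeries R ({0} : Set (σ →₀ ℕ)) = 1 := by
  classical
  ext d
  simp [coeff_generatingSeries, coeff_one, Set.indicator_apply]

theorem generatingSeries_sdiff [Ring R] {S T : Set (σ →₀ ℕ)} (hTS : T ⊆ S) :
    generatingSeries R (S \ T) = generatingSeries R S - generatingSeries R T :=
  Set.indicator_sdiff hTS 1

theorem generatingSeries_mul_monomial [Semiring R] (S : Set (σ →₀ ℕ)) (m : σ →₀ ℕ) :
    generatingSeries R S * monomial m 1 = generatingSeries R ((· + m) '' S) := by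
  ext d
  by_cases hmd : m ≤ d
  · obtain ⟨e, rfl⟩ := le_iff_exists_add'.1 hmd
    rw [coeff_add_mul_monomial, mul_one]
    exact (Set.indicator_image (f := (1 : (σ →₀ ℕ) → R)) (add_left_injective m)).symm
  · have hd : d ∉ (· + m) '' S := by
      rintro ⟨e, -, rfl⟩
      exact hmd le_add_self
    rw [coeff_mul_monomial, if_neg hmd, coeff_generatingSeries, Set.indicator_of_notMem hd]

theorem generatingSeries_mul_one_sub_monomial [Ring R] {S : Set (σ →₀ ℕ)} {m : σ →₀ ℕ}
    (hS : Set.MapsTo (· + m) S S) :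
    generatingSeries R S * (1 - monomial m 1) = generatingSeries R (S \ (· + m) '' S) := by
  rw [mul_sub, mul_one, generatingSeries_mul_monomial, generatingSeries_sdiff R hS.image_subset]

theorem prod_X_eq_monomial_indicator [CommSemiring R] (s : Finset σ) :
    ∏ b ∈ s, (X b : MvPowerSeries σ R) = monomial (Finsupp.indicator s fun _ _ ↦ 1) 1 := by
  simp only [X_def, prod_monomial, Finset.prod_const_one,
    Finsupp.indicator_eq_sum_single s fun _ ↦ 1]

end GeneratingSeries

section PartitionsOn

variable {α : Type*} [Preorder α]

/-- The additive monoid of `s`-partitions for a subset `s` of a preorder, each extended by zero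
to the ambient type, so that partitions of different subsets are exponents in the same
variables. -/
def partitionsOn (s : Set α) : AddSubmonoid (α →₀ ℕ) where
  carrier := {d | AntitoneOn d s ∧ ∀ x ∉ s, d x = 0}
  zero_mem' := ⟨antitoneOn_const, fun _ _ ↦ rfl⟩
  add_mem' hd he := ⟨hd.1.add he.1, fun x hx ↦ by simp [hd.2 x hx, he.2 x hx]⟩

theorem mem_partitionsOn {s : Set α} {d : α →₀ ℕ} :
    d ∈ partitionsOn s ↔ AntitoneOn d s ∧ ∀ x ∉ s, d x = 0 :=
  Iff.rfl

theorem partitionsOn_empty : partitionsOn (∅ : Set α) = ⊥ := by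
  ext d
  simp [mem_partitionsOn, Finsupp.ext_iff, AntitoneOn]

theorem indicator_one_mem_partitionsOn (s : Finset α) :
    Finsupp.indicator s (fun _ _ ↦ 1) ∈ partitionsOn (s : Set α) := by
  refine ⟨fun x hx y hy _ ↦ ?_, fun x hx ↦ Finsupp.indicator_of_notMem hx _⟩
  rw [Finsupp.indicator_of_mem hx, Finsupp.indicator_of_mem hy]

theorem mem_image_add_indicator_one_iff {s : Finset α} {a : α} (ha : IsGreatest (s : Set α) a)
    {d : α →₀ ℕ} (hd : d ∈ partitionsOn (s : Set α)) :
    d ∈ (· + Finsupp.indicator s fun _ _ ↦ 1) '' (partitionsOn (s : Set α) : Set (α →₀ ℕ)) ↔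
      d a ≠ 0 := by
  constructor
  · rintro ⟨e, -, rfl⟩
    simp [Finsupp.indicator_of_mem ha.1]
  · intro hda
    have one_le : Finsupp.indicator s (fun _ _ ↦ 1) ≤ d := fun x ↦ by
      by_cases hx : x ∈ s
      · rw [Finsupp.indicator_of_mem hx]
        exact (Nat.one_le_iff_ne_zero.2 hda).trans (hd.1 hx ha.1 (ha.2 hx))
      · simp [Finsupp.indicator_of_notMem hx]
    refine ⟨d - Finsupp.indicator s fun _ _ ↦ 1, ⟨fun x hx y hy hxy ↦ ?_, fun x hx ↦ ?_⟩,
      tsub_add_cancel_of_le one_le⟩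
    · simpa only [Finsupp.tsub_apply, Finsupp.indicator_of_mem hx, Finsupp.indicator_of_mem hy]
        using Nat.sub_le_sub_right (hd.1 hx hy hxy) 1
    · rw [Finsupp.tsub_apply, hd.2 x hx, zero_tsub]

theorem mem_partitionsOn_iff_mem_insert {s : Set α} {a : α} (ha : ∀ x ∈ s, x < a) {d : α →₀ ℕ} :
    d ∈ partitionsOn s ↔ d ∈ partitionsOn (insert a s) ∧ d a = 0 := by
  constructor
  · rintro ⟨hanti, hzero⟩
    have hda : d a = 0 := hzero a fun has ↦ (ha a has).false
    refine ⟨⟨?_, fun x hx ↦ hzero x fun hxs ↦ hx (.inr hxs)⟩, hda⟩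
    rintro x (rfl | hx) y (rfl | hy) hxy
    · exact le_rfl
    · exact absurd hxy (ha y hy).not_ge
    · exact hda.trans_le (Nat.zero_le _)
    · exact hanti hx hy hxy
  · rintro ⟨⟨hanti, hzero⟩, hda⟩
    refine ⟨hanti.mono (Set.subset_insert a s), fun x hx ↦ ?_⟩
    obtain rfl | hxa := eq_or_ne x a
    · exact hda
    · exact hzero x (by simp [hxa, hx])

variable (R : Type*) [CommRing R]

theorem generatingSeries_partitionsOn_insert_mul [DecidableEq α] {s : Finset α} {a : α}
    (ha : ∀ x ∈ s, x < a) :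
    generatingSeries R (partitionsOn (insert a s : Set α)) *
        (1 - ∏ b ∈ insert a s, X b) =
      generatingSeries R (partitionsOn (s : Set α)) := by
  have greatest : IsGreatest ((insert a s : Finset α) : Set α) a :=
    ⟨Finset.mem_insert_self a s,
      (Finset.forall_mem_insert ..).2 ⟨le_rfl, fun x hx ↦ (ha x hx).le⟩⟩
  rw [← Finset.coe_insert, prod_X_eq_monomial_indicator, generatingSeries_mul_one_sub_monomial R
    fun d hd ↦ add_mem hd (indicator_one_mem_partitionsOn (insert a s))]
  congr 1
  ext d
  rw [SetLike.mem_coe, mem_partitionsOn_iff_mem_insert ha, ← Finset.coe_insert, Set.mem_sdiff]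
  exact and_congr_right fun hd ↦ (mem_image_add_indicator_one_iff greatest hd).not_left

end PartitionsOn

theorem chain_pgf_general (R : Type*) [CommRing R] {α : Type*} [LinearOrder α] (s : Finset α) :
    generatingSeries R (partitionsOn (s : Set α)) *
      ∏ a ∈ s, (1 - ∏ b ∈ s.filter (· ≤ a), X b) = 1 := by
  induction s using Finset.induction_on_max with
  | empty => simp [partitionsOn_empty, generatingSeries_singleton_zero]
  | insert a s ha ih =>
    have filter_le_top : (insert a s).filter (· ≤ a) = insert a s :=
      Finset.filter_true_of_mem <|
        (Finset.forall_mem_insert ..).2 ⟨le_rfl, fun x hx ↦ (ha x hx).le⟩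
    have filter_le_of_mem : ∀ c ∈ s, (insert a s).filter (· ≤ c) = s.filter (· ≤ c) :=
      fun c hc ↦ by rw [Finset.filter_insert, if_neg (ha c hc).not_ge]
    rw [Finset.prod_insert fun has ↦ (ha a has).false, filter_le_top, ← mul_assoc,
      Finset.coe_insert, generatingSeries_partitionsOn_insert_mul R ha,
      Finset.prod_congr rfl fun c hc ↦ by rw [filter_le_of_mem c hc], ih]

theorem pgf_eq_generatingSeries (α : Type*) [Fintype α] [PartialOrder α] :
    pgf α = generatingSeries ℤ (partitionsOn (Set.univ : Set α)) := by
  classical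
  ext d
  rw [coeff_generatingSeries, Set.indicator_apply]
  exact if_congr (by simp [mem_partitionsOn, antitoneOn_univ, Antitone]) rfl rfl

theorem chain_pgf (α : Type*) [Fintype α] [LinearOrder α] :
    pgf α * ∏ a : α, (1 - ∏ b ∈ Finset.univ.filter (· ≤ a), (X b : MvPowerSeries α ℤ)) = 1 := by
  rw [pgf_eq_generatingSeries, ← Finset.coe_univ, chain_pgf_general]
end

section
/- Let P be a finite poset, let b ∈ P be a removable element, let a ∈ P be the element covered by b, and let c ∈ P be the element covering b. Then (1 − x_b) · f_P = f_{P∖{b}}|_{x_c := x_b x_c} − x_b · (f_{P∖{b}}|_{x_a := x_a x_b}) as an identity of multivariate formal power series over ℤ, where P∖{b} denotes the induced subposet of P on the complement of {b} and its generating function is regarded as a series in the variables (x_u)_{u ∈ P}. -/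
open MvPowerSeries

open Classical in
/-- `f_{P∖{b}}`, regarded as a series in the variables `(x_u)_{u ∈ P}`, with the
variable `x_w` replaced by the monomial `x_b * x_w`.  The substitution sends the
monomial `∏_{u ≠ b} x_u^{τ(u)}` to `x_b^{τ(w)} ∏_{u ≠ b} x_u^{τ(u)}`, so the
coefficient at an exponent vector `e` is `1` iff `e b = e w` and the restriction
of `e` to `P∖{b}` is order-reversing. -/
noncomputable def delSub (α : Type*) [Fintype α] [PartialOrder α] (b w : α) :
    MvPowerSeries α ℤ :=
  fun e => if e b = e w ∧ ∀ x y : α, x ≠ b → y ≠ b → x ≤ y → e y ≤ e x then 1 else 0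

/-!
Fix the values of an exponent vector `d` away from `b`. If they are order-reversing on `P∖{b}`,
then `d` is a `P`-partition exactly when `d c ≤ d b ≤ d a`, so these values contribute the geometric
sum `∑_{k = d c}^{d a} x_b ^ k` to `f_P`. Multiplying it by `1 - x_b` telescopes to
`x_b ^ d c - x_b ^ (d a + 1)`, and the two terms are the contributions of the two substituted
series.
-/

section Order

variable {α β : Type*} [PartialOrder α] {a b c : α}

theorem isGreatest_Iio_of_unique_covBy [IsStronglyCoatomic α] (hab : a ⋖ b)
    (ha : ∀ x, x ⋖ b → x = a) : IsGreatest (Set.Iio b) a := by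
  refine ⟨hab.lt, fun x hx => ?_⟩
  obtain ⟨z, hxz, hz⟩ := exists_le_covBy_of_lt hx
  exact hxz.trans_eq (ha z hz)

theorem isLeast_Ioi_of_unique_covBy [IsStronglyAtomic α] (hbc : b ⋖ c)
    (hc : ∀ x, b ⋖ x → x = c) : IsLeast (Set.Ioi b) c := by
  refine ⟨hbc.lt, fun x hx => ?_⟩
  obtain ⟨z, hz, hzx⟩ := exists_covBy_le_of_lt hx
  exact (hc z hz).symm.trans_le hzx

theorem antitone_iff_antitoneOn_compl_singleton [Preorder β] (ha : IsGreatest (Set.Iio b) a)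
    (hc : IsLeast (Set.Ioi b) c) {f : α → β} :
    Antitone f ↔ AntitoneOn f {b}ᶜ ∧ f b ∈ Set.Icc (f c) (f a) := by
  have hab : a < b := ha.1
  have hbc : b < c := hc.1
  refine ⟨fun hf => ⟨hf.antitoneOn _, hf hbc.le, hf hab.le⟩, ?_⟩
  rintro ⟨hf, hcb, hba⟩ x y hxy
  rcases hxy.eq_or_lt with rfl | hlt
  · exact le_rfl
  by_cases hx : x = b
  · subst hx
    exact (hf hbc.ne' hlt.ne' (hc.2 hlt)).trans hcb
  by_cases hy : y = b
  · subst hy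
    exact hba.trans (hf hlt.ne hab.ne (ha.2 hlt))
  exact hf hx hy hxy

end Order

theorem ite_mem_Icc_sub_ite_mem_Icc_succ {m n : ℕ} (hmn : m ≤ n) (k : ℕ) :
    (if k ∈ Set.Icc m n then 1 else 0 : ℤ) - (if k ∈ Set.Icc (m + 1) (n + 1) then 1 else 0) =
      (if k = m then 1 else 0) - (if k = n + 1 then 1 else 0) := by
  simp only [Set.mem_Icc]
  split_ifs <;> omega

theorem coeff_X_mul_eq_ite {σ R : Type*} [Semiring R] (s : σ) (φ : MvPowerSeries σ R)
    (d : σ →₀ ℕ) :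
    coeff d (X s * φ) = if 1 ≤ d s then coeff (d - Finsupp.single s 1) φ else 0 := by
  rw [X_def, coeff_monomial_mul]
  simp only [Finsupp.single_le_iff, one_mul]

theorem antitoneOn_compl_singleton_tsub_single_iff {α : Type*} [Preorder α] {b : α}
    {d : α →₀ ℕ} {n : ℕ} :
    AntitoneOn (d - Finsupp.single b n : α →₀ ℕ) {b}ᶜ ↔ AntitoneOn d {b}ᶜ := by
  refine Set.EqOn.congr_antitoneOn fun x hx => ?_
  rw [Finsupp.tsub_apply, Finsupp.single_eq_of_ne hx, tsub_zero]

section Coefficients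

variable {α : Type*} [Fintype α] [PartialOrder α] {a b c w : α} (d : α →₀ ℕ)

open Classical in
theorem coeff_pgf : coeff d (pgf α) = if Antitone d then 1 else 0 :=
  rfl

open Classical in
theorem coeff_delSub :
    coeff d (delSub α b w) = if AntitoneOn d {b}ᶜ ∧ d b = d w then 1 else 0 := by
  rw [coeff_apply, delSub]
  refine if_congr ?_ rfl rfl
  rw [and_comm]
  exact and_congr_left' ⟨fun h x hx y hy => h x y hx hy, fun h x y hx hy => h hx hy⟩

open Classical in
theorem coeff_X_mul_delSub (hw : w ≠ b) :
    coeff d (X b * delSub α b w) = if AntitoneOn d {b}ᶜ ∧ d b = d w + 1 then 1 else 0 := by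
  simp only [coeff_X_mul_eq_ite, coeff_delSub, antitoneOn_compl_singleton_tsub_single_iff,
    Finsupp.tsub_apply, Finsupp.single_eq_same, Finsupp.single_eq_of_ne hw, tsub_zero, ← ite_and]
  refine if_congr ?_ rfl rfl
  rw [and_left_comm]
  exact and_congr_right fun _ => by omega

open Classical in
theorem coeff_pgf_of_isGreatest_of_isLeast (ha : IsGreatest (Set.Iio b) a)
    (hc : IsLeast (Set.Ioi b) c) :
    coeff d (pgf α) = if AntitoneOn d {b}ᶜ ∧ d b ∈ Set.Icc (d c) (d a) then 1 else 0 := by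
  simp only [coeff_pgf, antitone_iff_antitoneOn_compl_singleton ha hc]

open Classical in
theorem coeff_X_mul_pgf_of_isGreatest_of_isLeast (ha : IsGreatest (Set.Iio b) a)
    (hc : IsLeast (Set.Ioi b) c) :
    coeff d (X b * pgf α) =
      if AntitoneOn d {b}ᶜ ∧ d b ∈ Set.Icc (d c + 1) (d a + 1) then 1 else 0 := by
  have hab : a ≠ b := ha.1.ne
  have hcb : c ≠ b := hc.1.ne'
  simp only [coeff_X_mul_eq_ite, coeff_pgf_of_isGreatest_of_isLeast _ ha hc,
    antitoneOn_compl_singleton_tsub_single_iff, Finsupp.tsub_apply, Finsupp.single_eq_same,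
    Finsupp.single_eq_of_ne hab, Finsupp.single_eq_of_ne hcb, tsub_zero, Set.mem_Icc, ← ite_and]
  refine if_congr ?_ rfl rfl
  rw [and_left_comm]
  exact and_congr_right fun _ => by omega

end Coefficients

/-- Deletion of a removable element `b` with `a ⋖ b ⋖ c`:
`(1 - x_b) f_P = f_{P∖{b}}|_{x_c := x_b x_c} - x_b ⬝ f_{P∖{b}}|_{x_a := x_a x_b}`. -/
theorem deletion_middle {α : Type*} [Fintype α] [PartialOrder α] (a b c : α)
    (hab : a ⋖ b) (hbc : b ⋖ c)
    (ha : ∀ x : α, x ⋖ b → x = a) (hc : ∀ x : α, b ⋖ x → x = c) :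
    (1 - X b) * pgf α = delSub α b c - X b * delSub α b a := by
  have ha' := isGreatest_Iio_of_unique_covBy hab ha
  have hc' := isLeast_Ioi_of_unique_covBy hbc hc
  ext d
  rw [sub_mul, one_mul, map_sub, map_sub, coeff_pgf_of_isGreatest_of_isLeast d ha' hc',
    coeff_X_mul_pgf_of_isGreatest_of_isLeast d ha' hc', coeff_delSub,
    coeff_X_mul_delSub d hab.ne]
  by_cases hd : AntitoneOn d {b}ᶜ
  · have hca : d c ≤ d a := hd hab.ne hbc.ne' (hab.le.trans hbc.le)
    simpa only [hd, true_and] using ite_mem_Icc_sub_ite_mem_Icc_succ hca (d b)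
  · simp only [hd, false_and, if_false]
end

section
/- Let P be a finite poset, let b ∈ P be a removable element, let a ∈ P be the element covered by b, and suppose no element of P covers b. Then (1 − x_b) · f_P = f_{P∖{b}} − x_b · (f_{P∖{b}}|_{x_a := x_a x_b}) as an identity of multivariate formal power series over ℤ, where P∖{b} denotes the induced subposet of P on the complement of {b}. -/
/-!
Since `b` is maximal and `a` is its only lower cover, a `P`-partition is a `P∖{b}`-partition `σ`
together with a value `σ b ∈ {0, …, σ a}`. For a fixed `σ` on `P∖{b}` the values at `b` contribute
the geometric sum `1 + x_b + ⋯ + x_b ^ σ a`, which multiplication by `1 - x_b` telescopes to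
`1 - x_b * x_b ^ σ a`; the factor `x_b ^ σ a` is the effect of substituting `x_a x_b` for `x_a`.
-/

open MvPowerSeries

open Classical in
/-- `f_{P∖{b}}`, regarded as a series in the variables `(x_u)_{u ∈ P}`:
the coefficient at `e` is `1` iff `e b = 0` and the restriction of `e`
to `P∖{b}` is order-reversing. -/
noncomputable def delGF (α : Type*) [Fintype α] [PartialOrder α] (b : α) :
    MvPowerSeries α ℤ :=
  fun e => if e b = 0 ∧ ∀ x y : α, x ≠ b → y ≠ b → x ≤ y → e y ≤ e x then 1 else 0

section Order

variable {α β : Type*} {a b : α}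

theorem le_of_lt_of_forall_covBy_eq [Preorder α] [IsStronglyCoatomic α]
    (h : ∀ x, x ⋖ b → x = a) {x : α} (hxb : x < b) : x ≤ a := by
  obtain ⟨z, hxz, hzb⟩ := exists_le_covBy_of_lt hxb
  exact h z hzb ▸ hxz

theorem antitone_iff_antitoneOn_compl_singleton_and_le [PartialOrder α] [Preorder β]
    {f : α → β} (hb : IsMax b) (hab : a < b) (hlt : ∀ x < b, x ≤ a) :
    Antitone f ↔ AntitoneOn f {b}ᶜ ∧ f b ≤ f a := by
  refine ⟨fun hf => ⟨hf.antitoneOn _, hf hab.le⟩, fun ⟨hf, hba⟩ => ?_⟩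
  refine antitone_iff_forall_lt.mpr fun x y hxy => ?_
  have hxb : x ≠ b := fun h => hb.not_lt (h ▸ hxy)
  obtain rfl | hyb := eq_or_ne y b
  · exact hba.trans (hf hxb hab.ne (hlt x hxy))
  · exact hf hxb hyb hxy.le

theorem antitoneOn_compl_singleton_iff [Preorder α] [Preorder β] {f : α → β} :
    AntitoneOn f {b}ᶜ ↔ ∀ x y, x ≠ b → y ≠ b → x ≤ y → f y ≤ f x :=
  ⟨fun h _ _ hx hy => h hx hy, fun h _ hx _ hy => h _ _ hx hy⟩

end Order

section ExponentSeries

variable {σ R : Type*}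

/-- The generating function `∑_{d ∈ S} x^d` of a set `S` of exponent vectors. The series `pgf`,
`delGF` and `delSub` all have this form, with `S` cut out by order conditions. -/
noncomputable def exponentSeries (R : Type*) [Zero R] [One R] (S : Set (σ →₀ ℕ)) :
    MvPowerSeries σ R :=
  S.indicator 1

theorem coeff_exponentSeries [Semiring R] (S : Set (σ →₀ ℕ)) (d : σ →₀ ℕ) [Decidable (d ∈ S)] :
    coeff d (exponentSeries R S) = if d ∈ S then 1 else 0 :=
  Set.indicator_apply S 1 d

theorem coeff_single_add_X_mul [Semiring R] (s : σ) (d : σ →₀ ℕ) (φ : MvPowerSeries σ R) :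
    coeff (Finsupp.single s 1 + d) (X s * φ) = coeff d φ :=
  (coeff_add_monomial_mul _ _ φ 1).trans (one_mul _)

theorem coeff_X_mul_of_apply_eq_zero [Semiring R] {s : σ} {d : σ →₀ ℕ} (hd : d s = 0)
    (φ : MvPowerSeries σ R) : coeff d (X s * φ) = 0 :=
  X_dvd_iff.mp (dvd_mul_right _ _) d hd

theorem one_sub_X_mul_exponentSeries_le [Ring R] {s : σ} {S : Set (σ →₀ ℕ)} {m : (σ →₀ ℕ) → ℕ}
    (hS : ∀ d, Finsupp.single s 1 + d ∈ S ↔ d ∈ S)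
    (hm : ∀ d, m (Finsupp.single s 1 + d) = m d) :
    (1 - X s) * exponentSeries R {d ∈ S | d s ≤ m d} =
      exponentSeries R {d ∈ S | d s = 0} - X s * exponentSeries R {d ∈ S | d s = m d} := by
  classical
  ext e
  rw [sub_mul, one_mul, map_sub, map_sub]
  by_cases he : e s = 0
  · simp [coeff_X_mul_of_apply_eq_zero he, coeff_exponentSeries, he]
  · obtain ⟨d, rfl⟩ : ∃ d, e = Finsupp.single s 1 + d :=
      exists_add_of_le (Finsupp.single_le_iff.mpr (Nat.one_le_iff_ne_zero.mpr he))
    have hs : (Finsupp.single s 1 + d : σ →₀ ℕ) s = d s + 1 := by simp [add_comm]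
    simp only [coeff_single_add_X_mul, coeff_exponentSeries, Set.mem_ofPred_eq, hS, hm, hs]
    -- With `k = d s` and `m = m d`, the indicators satisfy `[k + 1 ≤ m] - [k ≤ m] = -[k = m]`.
    grind

end ExponentSeries

section PartitionSeries

variable (α : Type*) [Fintype α] [PartialOrder α]

theorem pgf_eq_exponentSeries : pgf α = exponentSeries ℤ {d | Antitone d} := by
  classical
  ext d
  rw [coeff_exponentSeries]
  simp only [coeff_apply, pgf, Antitone, Set.mem_ofPred_eq]

theorem delGF_eq_exponentSeries (b : α) :
    delGF α b = exponentSeries ℤ {d | AntitoneOn d {b}ᶜ ∧ d b = 0} := by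
  classical
  ext d
  rw [coeff_exponentSeries]
  simp only [coeff_apply, delGF, antitoneOn_compl_singleton_iff, Set.mem_ofPred_eq, and_comm]

theorem delSub_eq_exponentSeries (b w : α) :
    delSub α b w = exponentSeries ℤ {d | AntitoneOn d {b}ᶜ ∧ d b = d w} := by
  classical
  ext d
  rw [coeff_exponentSeries]
  simp only [coeff_apply, delSub, antitoneOn_compl_singleton_iff, Set.mem_ofPred_eq, and_comm]

end PartitionSeries

/-- Deletion of a removable element `b` with `a ⋖ b` and no element covering `b`:
`(1 - x_b) f_P = f_{P∖{b}} - x_b ⬝ f_{P∖{b}}|_{x_a := x_a x_b}`. -/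
theorem deletion_top {α : Type*} [Fintype α] [PartialOrder α] (a b : α)
    (hab : a ⋖ b) (ha : ∀ x : α, x ⋖ b → x = a) (hnoc : ∀ x : α, ¬ b ⋖ x) :
    (1 - X b) * pgf α = delGF α b - X b * delSub α b a := by
  have hb : IsMax b := by
    by_contra hb
    obtain ⟨x, hx⟩ := exists_covBy_of_wellFoundedLT hb
    exact hnoc x hx
  have antitone_iff (d : α →₀ ℕ) : Antitone d ↔ AntitoneOn d {b}ᶜ ∧ d b ≤ d a :=
    antitone_iff_antitoneOn_compl_singleton_and_le hb hab.lt
      fun _ => le_of_lt_of_forall_covBy_eq ha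
  have eqOn (d : α →₀ ℕ) : Set.EqOn (Finsupp.single b 1 + d : α →₀ ℕ) d {b}ᶜ :=
    fun x hx => by simp [Finsupp.single_eq_of_ne hx]
  simp only [pgf_eq_exponentSeries, delGF_eq_exponentSeries, delSub_eq_exponentSeries,
    antitone_iff]
  exact one_sub_X_mul_exponentSeries_le (S := {d | AntitoneOn d {b}ᶜ}) (m := fun d => d a)
    (fun d => (eqOn d).congr_antitoneOn) fun d => eqOn d hab.ne
end

section
/- Let P be a finite poset, A an antichain of P, and M a nonempty subset of A. Then the relation on (P∖M) ∪ {M} defined by clauses (a)–(e) of the partially linear extension P(M,A) is reflexive, antisymmetric and transitive, i.e. it is a partial order. -/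
/-- The relation of the partially linear extension `P(M,A)`: the underlying set is
`(P∖M) ∪ {M}`, where the glued element `M` is represented by `none`. -/
def pleRel {α : Type*} [PartialOrder α] (A M : Finset α) :
    Option {u : α // u ∉ M} → Option {u : α // u ∉ M} → Prop
  | some x, some y => x.1 ≤ y.1 ∨ ∃ x' ∈ A, ∃ y' ∈ M, x.1 ≤ x' ∧ y' ≤ y.1
  | some x, none => ∃ x' ∈ A, x.1 ≤ x'
  | none, some y => ∃ y' ∈ M, y' ≤ y.1
  | none, none => True

/-!
The relation of `P(M,A)` is the disjoint sum of `P∖M` with the point `M`, enlarged by all pairs in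
`L × U`, where `L` and `U` are the sets of elements below and above the glued point. Since `L` is a
lower set and `U` an upper set, adding `L × U` preserves transitivity, and it preserves antisymmetry
as soon as `L ∩ U` has at most one element. Here `L ∩ U = {M}`: an element of `P` lying above an
element of `M` and below an element of `A` belongs to `M`, because `A` is an antichain.
-/

section LinkRel

variable {β : Type*} {r : β → β → Prop} {L U : Set β}

/-- The relation `r` enlarged by all pairs in `L × U`. When `r` is a preorder, `L` a lower set and
`U` an upper set, it is the least preorder that contains `r` and puts every element of `L` below
every element of `U`. -/
def linkRel (r : β → β → Prop) (L U : Set β) (x y : β) : Prop :=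
  r x y ∨ x ∈ L ∧ y ∈ U

instance linkRel_refl [Std.Refl r] : Std.Refl (linkRel r L U) where
  refl x := Or.inl (refl_of r x)

theorem linkRel_isTrans [IsTrans β r] (hL : ∀ ⦃x y⦄, r x y → y ∈ L → x ∈ L)
    (hU : ∀ ⦃x y⦄, r x y → x ∈ U → y ∈ U) : IsTrans β (linkRel r L U) where
  trans x y z := by
    rintro (hxy | ⟨hxL, hyU⟩) (hyz | ⟨hyL, hzU⟩)
    · exact Or.inl (trans_of r hxy hyz)
    · exact Or.inr ⟨hL hxy hyL, hzU⟩
    · exact Or.inr ⟨hxL, hU hyz hyU⟩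
    · exact Or.inr ⟨hxL, hzU⟩

theorem linkRel_antisymm [Std.Antisymm r] (hL : ∀ ⦃x y⦄, r x y → y ∈ L → x ∈ L)
    (hU : ∀ ⦃x y⦄, r x y → x ∈ U → y ∈ U) (hLU : (L ∩ U).Subsingleton) :
    Std.Antisymm (linkRel r L U) where
  antisymm x y := by
    rintro (hxy | ⟨hxL, hyU⟩) (hyx | ⟨hyL, hxU⟩)
    · exact antisymm_of r hxy hyx
    · exact hLU ⟨hL hxy hyL, hxU⟩ ⟨hyL, hU hxy hxU⟩
    · exact hLU ⟨hxL, hU hyx hyU⟩ ⟨hL hyx hxL, hyU⟩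
    · exact hLU ⟨hxL, hxU⟩ ⟨hyL, hyU⟩

end LinkRel

section OptionRel

variable {β : Type*} {r : β → β → Prop}

instance optionRel_refl [Std.Refl r] : Std.Refl (Option.Rel r) where
  refl
    | none => .none
    | some x => .some (refl_of r x)

instance optionRel_isTrans [IsTrans β r] : IsTrans (Option β) (Option.Rel r) where
  trans
    | _, _, _, .none, .none => .none
    | _, _, _, .some hxy, .some hyz => .some (trans_of r hxy hyz)

instance optionRel_antisymm [Std.Antisymm r] : Std.Antisymm (Option.Rel r) where
  antisymm
    | _, _, .none, .none => rfl
    | _, _, .some hxy, .some hyx => congrArg some (antisymm_of r hxy hyx)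

end OptionRel

theorem mem_of_isAntichain_of_le_of_le {α : Type*} [PartialOrder α] {A M : Set α}
    (hA : IsAntichain (· ≤ ·) A) (hMA : M ⊆ A) {m u a : α} (hm : m ∈ M) (ha : a ∈ A)
    (hmu : m ≤ u) (hua : u ≤ a) : u ∈ M := by
  obtain rfl : m = a := hA.eq (hMA hm) ha (hmu.trans hua)
  obtain rfl : u = m := hua.antisymm hmu
  exact hm

section PleRel

variable {α : Type*} [PartialOrder α] {A M : Finset α}

/-- The principal lower set of the glued point in the partially linear extension `P(M,A)`. -/
def pleIic (A M : Finset α) : Set (Option {u : α // u ∉ M}) :=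
  {x | pleRel A M x none}

/-- The principal upper set of the glued point in the partially linear extension `P(M,A)`. -/
def pleIci (A M : Finset α) : Set (Option {u : α // u ∉ M}) :=
  {x | pleRel A M none x}

theorem pleRel_eq_linkRel :
    pleRel A M = linkRel (Option.Rel (· ≤ ·)) (pleIic A M) (pleIci A M) := by
  ext (_ | x) (_ | y)
  · simp [linkRel, pleIic, pleIci, pleRel]
  · simp [linkRel, pleIic, pleIci, pleRel]
  · simp [linkRel, pleIic, pleIci, pleRel]
  · have through_glued : (∃ a ∈ A, ∃ m ∈ M, x.1 ≤ a ∧ m ≤ y.1) ↔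
        (∃ a ∈ A, x.1 ≤ a) ∧ ∃ m ∈ M, m ≤ y.1 :=
      ⟨fun ⟨a, ha, m, hm, hxa, hmy⟩ => ⟨⟨a, ha, hxa⟩, m, hm, hmy⟩,
        fun ⟨⟨a, ha, hxa⟩, m, hm, hmy⟩ => ⟨a, ha, m, hm, hxa, hmy⟩⟩
    simp [linkRel, pleIic, pleIci, pleRel, through_glued]

theorem mem_pleIic_of_optionRel ⦃x y : Option {u : α // u ∉ M}⦄
    (hxy : Option.Rel (· ≤ ·) x y) (hy : y ∈ pleIic A M) : x ∈ pleIic A M := by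
  cases hxy with
  | none => exact hy
  | some hxy =>
    obtain ⟨a, ha, hya⟩ := hy
    exact ⟨a, ha, le_trans hxy hya⟩

theorem mem_pleIci_of_optionRel ⦃x y : Option {u : α // u ∉ M}⦄
    (hxy : Option.Rel (· ≤ ·) x y) (hx : x ∈ pleIci A M) : y ∈ pleIci A M := by
  cases hxy with
  | none => exact hx
  | some hxy =>
    obtain ⟨m, hm, hmx⟩ := hx
    exact ⟨m, hm, le_trans hmx hxy⟩

theorem pleIic_inter_pleIci (hA : IsAntichain (· ≤ ·) (A : Set α)) (hMA : M ⊆ A) :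
    pleIic A M ∩ pleIci A M = {none} := by
  refine Set.Subset.antisymm ?_ (Set.singleton_subset_iff.2 ⟨trivial, trivial⟩)
  rintro (_ | u) ⟨hu_le, hle_u⟩
  · rfl
  · obtain ⟨a, ha, hua⟩ := hu_le
    obtain ⟨m, hm, hmu⟩ := hle_u
    have huM : u.1 ∈ M :=
      mem_of_isAntichain_of_le_of_le hA (Finset.coe_subset.2 hMA) hm ha hmu hua
    exact absurd huM u.2

instance pleRel_isPreorder : IsPreorder (Option {u : α // u ∉ M}) (pleRel A M) := by
  rw [pleRel_eq_linkRel]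
  exact { linkRel_isTrans mem_pleIic_of_optionRel mem_pleIci_of_optionRel with }

theorem pleRel_antisymm (hA : IsAntichain (· ≤ ·) (A : Set α)) (hMA : M ⊆ A) :
    Std.Antisymm (pleRel A M) := by
  have hsub : (pleIic A M ∩ pleIci A M).Subsingleton := by
    rw [pleIic_inter_pleIci hA hMA]
    exact Set.subsingleton_singleton
  rw [pleRel_eq_linkRel]
  exact linkRel_antisymm mem_pleIic_of_optionRel mem_pleIci_of_optionRel hsub

end PleRel

theorem pleRel_isPartialOrder_general {α : Type*} [PartialOrder α] (A M : Finset α)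
    (hA : IsAntichain (· ≤ ·) (A : Set α)) (hMA : M ⊆ A) :
    IsPartialOrder (Option {u : α // u ∉ M}) (pleRel A M) :=
  { pleRel_antisymm hA hMA with }

/-- For an antichain `A` of a finite poset `P` and a nonempty `M ⊆ A`, the relation
of the partially linear extension `P(M,A)` is reflexive, antisymmetric and
transitive, i.e. it is a partial order. -/
theorem pleRel_isPartialOrder {α : Type*} [Fintype α] [PartialOrder α]
    (A M : Finset α) (hA : IsAntichain (· ≤ ·) (A : Set α)) (hMA : M ⊆ A)
    (hM : M.Nonempty) :
    (∀ x, pleRel A M x x) ∧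
    (∀ x y, pleRel A M x y → pleRel A M y x → x = y) ∧
    (∀ x y z, pleRel A M x y → pleRel A M y z → pleRel A M x z) := by
  have := pleRel_isPartialOrder_general A M hA hMA
  exact ⟨refl_of _, fun _ _ => antisymm_of _, fun _ _ _ => trans_of _⟩
end

section
/- Let P be a finite poset, A an antichain of P, M a nonempty subset of A, and let S_M be the set of P-partitions σ of P such that σ(a) ≤ σ(x) for all a ∈ M and all x ∈ A. Then every σ ∈ S_M is constant on M, and the map sending σ ∈ S_M to the map σ' on P(M,A) defined by σ'(u) = σ(u) for u ∈ P∖M and σ'(M) = the common value of σ on M is a bijection from S_M onto the set of P-partitions of P(M,A). -/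
/-!
Let `q : P → P(M,A)` be the quotient map collapsing `M` to one point. Pulled back along `q`, the
relation of `P(M,A)` is the one generated by the order of `P` and all `x' ≤ y'` with `x' ∈ A`,
`y' ∈ M`; hence `τ` is a partition of `P(M,A)` exactly when `τ ∘ q` lies in `S_M`. As elements of
`S_M` are constant on `M`, they factor uniquely through `q`, so `τ ↦ τ ∘ q` inverts `σ ↦ σ'`.
-/

section GluingMap

variable {α β : Type*}

open Classical in
/-- The quotient map `P → P(M,A)`, which sends every element of `M` to the glued element `none`
and is the identity elsewhere. -/
noncomputable def gluingMap (M : Finset α) (u : α) : Option {u : α // u ∉ M} :=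
  if hu : u ∈ M then none else some ⟨u, hu⟩

/-- The map `σ'` on `P(M,A)` induced by a map `σ` on `P`. The value at the glued element is read
off at a chosen `m₀`, so this is the paper's `σ'` when `m₀ ∈ M` and `σ` is constant on `M`. -/
def descend {M : Finset α} (m₀ : α) (σ : α → β) (o : Option {u : α // u ∉ M}) : β :=
  o.elim (σ m₀) fun u => σ u.1

variable {M : Finset α} {u m₀ : α}

theorem gluingMap_of_mem (hu : u ∈ M) : gluingMap M u = none :=
  dif_pos hu

theorem gluingMap_of_notMem (hu : u ∉ M) : gluingMap M u = some ⟨u, hu⟩ :=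
  dif_neg hu

theorem gluingMap_surjective (hM : M.Nonempty) : Function.Surjective (gluingMap M)
  | none => hM.imp fun _ hm => gluingMap_of_mem hm
  | some u => ⟨u.1, gluingMap_of_notMem u.2⟩

theorem descend_comp_gluingMap {σ : α → β} (hσ : ∀ m ∈ M, σ m = σ m₀) :
    descend m₀ σ ∘ gluingMap M = σ := by
  funext u
  by_cases hu : u ∈ M
  · simp [descend, gluingMap_of_mem hu, hσ u hu]
  · simp [descend, gluingMap_of_notMem hu]

theorem descend_of_comp_gluingMap (hm₀ : m₀ ∈ M) (τ : Option {u : α // u ∉ M} → β) :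
    descend m₀ (τ ∘ gluingMap M) = τ := by
  funext o
  rcases o with _ | u
  · simp [descend, gluingMap_of_mem hm₀]
  · simp [descend, gluingMap_of_notMem u.2]

end GluingMap

section Partitions

variable {α β : Type*} [PartialOrder α]

/-- The set of `P(M,A)`-partitions, with values in an arbitrary ordered type `β` instead of `ℕ`. -/
def plePartitions (A M : Finset α) (β : Type*) [LE β] :
    Set (Option {u : α // u ∉ M} → β) :=
  {τ | ∀ o₁ o₂, pleRel A M o₁ o₂ → τ o₂ ≤ τ o₁}

/-- The set `S_M` of `P`-partitions attaining their minimum over `A` at every point of `M`, with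
values in an arbitrary ordered type `β` instead of `ℕ`. -/
def minPartitions (A M : Finset α) (β : Type*) [Preorder β] : Set (α → β) :=
  {σ | Antitone σ ∧ ∀ a ∈ M, ∀ x ∈ A, σ a ≤ σ x}

variable {A M : Finset α}

theorem pleRel_gluingMap_iff (hMA : M ⊆ A) {x y : α} :
    pleRel A M (gluingMap M x) (gluingMap M y) ↔
      x ≤ y ∨ ∃ x' ∈ A, ∃ y' ∈ M, x ≤ x' ∧ y' ≤ y := by
  by_cases hx : x ∈ M <;> by_cases hy : y ∈ M
  · rw [gluingMap_of_mem hx, gluingMap_of_mem hy]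
    exact iff_of_true trivial (.inr ⟨x, hMA hx, y, hy, le_rfl, le_rfl⟩)
  · rw [gluingMap_of_mem hx, gluingMap_of_notMem hy]
    constructor
    · rintro ⟨y', hy', hle⟩
      exact .inr ⟨x, hMA hx, y', hy', le_rfl, hle⟩
    · rintro (hxy | ⟨-, -, y', hy', -, hle⟩)
      exacts [⟨x, hx, hxy⟩, ⟨y', hy', hle⟩]
  · rw [gluingMap_of_notMem hx, gluingMap_of_mem hy]
    constructor
    · rintro ⟨x', hx', hle⟩
      exact .inr ⟨x', hx', y, hy, hle, le_rfl⟩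
    · rintro (hxy | ⟨x', hx', -, -, hle, -⟩)
      exacts [⟨y, hMA hy, hxy⟩, ⟨x', hx', hle⟩]
  · rw [gluingMap_of_notMem hx, gluingMap_of_notMem hy]
    exact Iff.rfl

theorem mem_minPartitions_iff [Preorder β] {σ : α → β} :
    σ ∈ minPartitions A M β ↔
      ∀ x y, (x ≤ y ∨ ∃ x' ∈ A, ∃ y' ∈ M, x ≤ x' ∧ y' ≤ y) → σ y ≤ σ x := by
  constructor
  · rintro ⟨hanti, hmin⟩ x y (hxy | ⟨x', hx', y', hy', hxx', hyy'⟩)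
    · exact hanti hxy
    · calc
        σ y ≤ σ y' := hanti hyy'
        _ ≤ σ x' := hmin y' hy' x' hx'
        _ ≤ σ x := hanti hxx'
  · exact fun h => ⟨fun x y hxy => h x y (.inl hxy),
      fun a ha x hx => h x a (.inr ⟨x, hx, a, ha, le_rfl, le_rfl⟩)⟩

theorem comp_gluingMap_mem_minPartitions_iff [Preorder β] (hMA : M ⊆ A) (hM : M.Nonempty)
    {τ : Option {u : α // u ∉ M} → β} :
    τ ∘ gluingMap M ∈ minPartitions A M β ↔ τ ∈ plePartitions A M β := by
  simp only [mem_minPartitions_iff, ← pleRel_gluingMap_iff hMA, Function.comp_apply]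
  exact ((gluingMap_surjective hM).forall₂
    (p := fun o₁ o₂ => pleRel A M o₁ o₂ → τ o₂ ≤ τ o₁)).symm

theorem eq_of_mem_minPartitions [PartialOrder β] (hMA : M ⊆ A) {σ : α → β}
    (hσ : σ ∈ minPartitions A M β) {m m' : α} (hm : m ∈ M) (hm' : m' ∈ M) : σ m = σ m' :=
  le_antisymm (hσ.2 m hm m' (hMA hm')) (hσ.2 m' hm' m (hMA hm))

theorem ple_partition_bijection_general [PartialOrder β] (hMA : M ⊆ A) {m₀ : α} (hm₀ : m₀ ∈ M) :
    (∀ σ ∈ minPartitions A M β, ∀ m ∈ M, ∀ m' ∈ M, σ m = σ m') ∧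
      Set.BijOn (descend m₀) (minPartitions A M β) (plePartitions A M β) := by
  have hconst : ∀ σ ∈ minPartitions A M β, ∀ m ∈ M, ∀ m' ∈ M, σ m = σ m' :=
    fun _ hσ _ hm _ hm' => eq_of_mem_minPartitions hMA hσ hm hm'
  have hleft : Set.LeftInvOn (· ∘ gluingMap M) (descend m₀) (minPartitions A M β) :=
    fun σ hσ => descend_comp_gluingMap fun m hm => hconst σ hσ m hm m₀ hm₀
  have hright : Set.RightInvOn (· ∘ gluingMap M) (descend m₀) (plePartitions A M β) :=
    fun τ _ => descend_of_comp_gluingMap hm₀ τ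
  have hmem (τ : Option {u : α // u ∉ M} → β) :
      τ ∘ gluingMap M ∈ minPartitions A M β ↔ τ ∈ plePartitions A M β :=
    comp_gluingMap_mem_minPartitions_iff hMA ⟨m₀, hm₀⟩
  have hmaps : Set.MapsTo (descend m₀) (minPartitions A M β) (plePartitions A M β) := by
    intro σ hσ
    rw [← hmem, show descend m₀ σ ∘ gluingMap M = σ from hleft hσ]
    exact hσ
  exact ⟨hconst, Set.InvOn.bijOn ⟨hleft, hright⟩ hmaps fun τ => (hmem τ).mpr⟩

end Partitions

/-- Let `A` be an antichain of a finite poset `P`, `M ⊆ A` nonempty (with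
`m₀ ∈ M`), and let `S_M` be the set of `P`-partitions `σ` with `σ a ≤ σ x` for
all `a ∈ M`, `x ∈ A`.  Every `σ ∈ S_M` is constant on `M`, and sending `σ` to
the map `σ'` on `P(M,A)` with `σ'(u) = σ u` for `u ∈ P∖M` and `σ'` of the glued
element equal to the common value of `σ` on `M` is a bijection from `S_M` onto
the set of `P(M,A)`-partitions. -/
theorem ple_partition_bijection {α : Type*} [Fintype α] [PartialOrder α]
    (A M : Finset α) (hA : IsAntichain (· ≤ ·) (A : Set α)) (hMA : M ⊆ A)
    (m₀ : α) (hm₀ : m₀ ∈ M) :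
    (∀ σ : α → ℕ,
      σ ∈ {σ : α → ℕ | (∀ x y : α, x ≤ y → σ y ≤ σ x) ∧ ∀ a ∈ M, ∀ x ∈ A, σ a ≤ σ x} →
      ∀ m ∈ M, ∀ m' ∈ M, σ m = σ m') ∧
    Set.BijOn
      (fun (σ : α → ℕ) (o : Option {u : α // u ∉ M}) =>
        Option.elim o (σ m₀) (fun u => σ u.1))
      {σ : α → ℕ | (∀ x y : α, x ≤ y → σ y ≤ σ x) ∧ ∀ a ∈ M, ∀ x ∈ A, σ a ≤ σ x}
      {τ : Option {u : α // u ∉ M} → ℕ | ∀ o₁ o₂, pleRel A M o₁ o₂ → τ o₂ ≤ τ o₁} :=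
  ple_partition_bijection_general hMA hm₀
end

section
/- Let P be a finite poset, A an antichain of P with |A| ≥ 2, and M a nonempty subset of A. Then the number of nonempty antichains of the partially linear extension P(M,A) is at most (the number of nonempty antichains of P) − 1. -/
/-!
The map `P → P(M,A)` gluing `M` to a point is surjective and order preserving, and its fibers are
antichains of `P`. Hence taking preimages sends nonempty antichains of `P(M,A)` injectively to
nonempty antichains of `P`. It misses one: if `M ≠ A`, the antichain `A` itself, since in `P(M,A)`
every element of `A ∖ M` lies below the glued element; if `M = A`, any singleton in `M`, since
preimages are unions of fibers and `M` is a fiber with at least two elements.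
-/

section Preimage

variable {α β : Type*} {r : α → α → Prop} {s : β → β → Prop} {f : α → β}

theorem isAntichain_preimage_of_fibers (hf : ∀ ⦃a b⦄, r a b → s (f a) (f b))
    (hfib : ∀ c, IsAntichain r (f ⁻¹' {c})) {S : Set β} (hS : IsAntichain s S) :
    IsAntichain r (f ⁻¹' S) := by
  intro a ha b hb hab hr
  rcases eq_or_ne (f a) (f b) with heq | hne
  · exact hfib (f b) heq rfl hab hr
  · exact hS ha hb hne (hf hr)

theorem ncard_antichains_lt_of_surjective [Finite α] (hsurj : Function.Surjective f)
    (hf : ∀ ⦃a b⦄, r a b → s (f a) (f b)) (hfib : ∀ c, IsAntichain r (f ⁻¹' {c}))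
    {T : Finset α} (hT : T.Nonempty) (hTr : IsAntichain r (T : Set α))
    (hTf : ∀ S : Set β, IsAntichain s S → f ⁻¹' S ≠ T) :
    {S : Finset β | S.Nonempty ∧ IsAntichain s (S : Set β)}.ncard <
      {S : Finset α | S.Nonempty ∧ IsAntichain r (S : Set α)}.ncard := by
  let pullback (S : Finset β) : Finset α := (Set.toFinite (f ⁻¹' S)).toFinset
  have coe_pullback (S : Finset β) : (pullback S : Set α) = f ⁻¹' S := Set.Finite.coe_toFinset _
  have pullback_injective : Function.Injective pullback := fun S S' h => by
    apply Finset.coe_injective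
    apply hsurj.preimage_injective
    rw [← coe_pullback, h, coe_pullback]
  rw [← Set.ncard_image_of_injective _ pullback_injective]
  refine Set.ncard_lt_ncard (Set.ssubset_iff_exists.2 ⟨?_, T, ⟨hT, hTr⟩, ?_⟩) (Set.toFinite _)
  · rintro _ ⟨S, ⟨hSne, hS⟩, rfl⟩
    constructor
    · rw [← Finset.coe_nonempty, coe_pullback]
      exact (Finset.coe_nonempty.2 hSne).preimage hsurj
    · rw [coe_pullback]
      exact isAntichain_preimage_of_fibers hf hfib hS
  · rintro ⟨S, ⟨-, hS⟩, rfl⟩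
    exact hTf S hS (coe_pullback S).symm

end Preimage

/-- The gluing map `P → P(M,A)`, which sends every element of `M` to the glued element `none` and
fixes the elements outside `M`. -/
def glue {α : Type*} [DecidableEq α] (M : Finset α) (a : α) : Option {u : α // u ∉ M} :=
  if h : a ∈ M then none else some ⟨a, h⟩

section Glue

variable {α : Type*} [DecidableEq α] {A M : Finset α} {a b m : α}

theorem glue_of_mem (ha : a ∈ M) : glue M a = none := dif_pos ha

theorem glue_of_notMem (ha : a ∉ M) : glue M a = some ⟨a, ha⟩ := dif_neg ha

theorem glue_surjective (hM : M.Nonempty) : Function.Surjective (glue M) := by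
  rintro (_ | ⟨a, ha⟩)
  · exact hM.imp fun _ => glue_of_mem
  · exact ⟨a, glue_of_notMem ha⟩

theorem mem_of_glue_eq_glue_of_ne (h : glue M a = glue M b) (hab : a ≠ b) : a ∈ M ∧ b ∈ M := by
  by_cases ha : a ∈ M <;> by_cases hb : b ∈ M <;> simp_all [glue]

theorem isAntichain_preimage_glue_singleton {r : α → α → Prop}
    (hM : IsAntichain r (M : Set α)) (c : Option {u : α // u ∉ M}) :
    IsAntichain r (glue M ⁻¹' {c}) := by
  intro a ha b hb hab
  obtain ⟨haM, hbM⟩ := mem_of_glue_eq_glue_of_ne (ha.trans hb.symm) hab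
  exact hM haM hbM hab

theorem preimage_glue_ne_singleton (hM : M.Nontrivial) (hm : m ∈ M)
    (S : Set (Option {u : α // u ∉ M})) : glue M ⁻¹' S ≠ {m} := by
  intro h
  obtain ⟨n, hn, hnm⟩ := hM.exists_ne m
  have hmS : glue M m ∈ S := h.ge rfl
  have hnS : glue M n ∈ S := by rwa [glue_of_mem hn, ← glue_of_mem hm]
  exact hnm (h.le hnS)

variable [PartialOrder α]

theorem pleRel_glue_of_le (hMA : M ⊆ A) (hab : a ≤ b) : pleRel A M (glue M a) (glue M b) := by
  by_cases ha : a ∈ M <;> by_cases hb : b ∈ M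
  · rw [glue_of_mem ha, glue_of_mem hb]
    trivial
  · rw [glue_of_mem ha, glue_of_notMem hb]
    exact ⟨a, ha, hab⟩
  · rw [glue_of_notMem ha, glue_of_mem hb]
    exact ⟨b, hMA hb, hab⟩
  · rw [glue_of_notMem ha, glue_of_notMem hb]
    exact Or.inl hab

theorem preimage_glue_ne_of_ssubset (hM : M.Nonempty) (hMA : M ⊂ A)
    {S : Set (Option {u : α // u ∉ M})} (hS : IsAntichain (pleRel A M) S) :
    glue M ⁻¹' S ≠ A := by
  intro h
  obtain ⟨m, hm⟩ := hM
  obtain ⟨a, haA, haM⟩ := Finset.exists_of_ssubset hMA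
  have hnone : none ∈ S := glue_of_mem hm ▸ h.ge (hMA.subset hm)
  have hsome : some ⟨a, haM⟩ ∈ S := glue_of_notMem haM ▸ h.ge haA
  exact hS hsome hnone (Option.some_ne_none _) ⟨a, haA, le_rfl⟩

theorem exists_isAntichain_forall_preimage_glue_ne (hA : IsAntichain (· ≤ ·) (A : Set α))
    (hcard : 2 ≤ A.card) (hMA : M ⊆ A) (hM : M.Nonempty) :
    ∃ T : Finset α, T.Nonempty ∧ IsAntichain (· ≤ ·) (T : Set α) ∧
      ∀ S : Set (Option {u : α // u ∉ M}), IsAntichain (pleRel A M) S → glue M ⁻¹' S ≠ T := by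
  rcases hMA.eq_or_ssubset with rfl | hssub
  · obtain ⟨m, hm⟩ := hM
    refine ⟨{m}, Finset.singleton_nonempty m, by simp, fun S _ => ?_⟩
    rw [Finset.coe_singleton]
    exact preimage_glue_ne_singleton (Finset.one_lt_card_iff_nontrivial.1 hcard) hm S
  · exact ⟨A, hM.mono hMA, hA, fun _ => preimage_glue_ne_of_ssubset hM hssub⟩

end Glue

/-- For an antichain `A` with `|A| ≥ 2` of a finite poset `P` and a nonempty
`M ⊆ A`, the partially linear extension `P(M,A)` has at least one nonempty
antichain fewer than `P`. -/
theorem antichains_ple {α : Type*} [Fintype α] [PartialOrder α]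
    (A M : Finset α) (hA : IsAntichain (· ≤ ·) (A : Set α)) (hcard : 2 ≤ A.card)
    (hMA : M ⊆ A) (hM : M.Nonempty) :
    {S : Finset (Option {u : α // u ∉ M}) |
        S.Nonempty ∧ IsAntichain (pleRel A M) (S : Set (Option {u : α // u ∉ M}))}.ncard ≤
      {S : Finset α | S.Nonempty ∧ IsAntichain (· ≤ ·) (S : Set α)}.ncard - 1 := by
  classical
  obtain ⟨T, hTne, hT, hTglue⟩ := exists_isAntichain_forall_preimage_glue_ne hA hcard hMA hM
  have hMantichain : IsAntichain (· ≤ ·) (M : Set α) := hA.subset (Finset.coe_subset.2 hMA)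
  exact Nat.le_sub_one_of_lt <|
    ncard_antichains_lt_of_surjective (glue_surjective hM) (fun _ _ => pleRel_glue_of_le hMA)
      (isAntichain_preimage_glue_singleton hMantichain) hTne hT hTglue
end

section
/- Define a step from a finite poset P to a finite poset Q to hold if either Q is order-isomorphic to the induced subposet P∖{b} for some removable element b of P, or Q is order-isomorphic to the partially linear extension P(M,A) for some antichain A of P and some nonempty M ⊆ A. Then every finite poset can be reduced to the empty poset by finitely many steps: for every finite poset P there is a finite sequence P = P_0, P_1, ..., P_k with P_k empty such that a step holds from P_i to P_{i+1} for each 0 ≤ i < k. -/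
/-- A finite poset: a partial order on `Fin n`. -/
structure FinPoset where
  n : ℕ
  le : Fin n → Fin n → Prop
  le_refl : ∀ a, le a a
  le_antisymm : ∀ a b, le a b → le b a → a = b
  le_trans : ∀ a b c, le a b → le b c → le a c

namespace FinPoset

/-- The strict order of a finite poset. -/
def lt (P : FinPoset) (a b : Fin P.n) : Prop := P.le a b ∧ a ≠ b

/-- `b` covers `a`: `a < b` and no element lies strictly between them. -/
def covers (P : FinPoset) (a b : Fin P.n) : Prop :=
  P.lt a b ∧ ¬ ∃ c, P.lt a c ∧ P.lt c b

/-- `b` is removable: it covers at most one element and is covered by at most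
one element. -/
def Removable (P : FinPoset) (b : Fin P.n) : Prop :=
  {x | P.covers x b}.Subsingleton ∧ {x | P.covers b x}.Subsingleton

/-- `A` is an antichain of `P`. -/
def IsAntichain' (P : FinPoset) (A : Finset (Fin P.n)) : Prop :=
  ∀ x ∈ A, ∀ y ∈ A, x ≠ y → ¬ P.le x y

/-- The relation of the partially linear extension `P(M,A)`, on the set
`(P∖M) ∪ {M}` where the glued element `M` is represented by `none`. -/
def pleRel (P : FinPoset) (A M : Finset (Fin P.n)) :
    Option {u : Fin P.n // u ∉ M} → Option {u : Fin P.n // u ∉ M} → Prop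
  | some x, some y => P.le x.1 y.1 ∨ ∃ x' ∈ A, ∃ y' ∈ M, P.le x.1 x' ∧ P.le y' y.1
  | some x, none => ∃ x' ∈ A, P.le x.1 x'
  | none, some y => ∃ y' ∈ M, P.le y' y.1
  | none, none => True

/-- A step from `P` to `Q`: either `Q` is order-isomorphic to the induced
subposet `P∖{b}` for some removable element `b` of `P`, or `Q` is
order-isomorphic to the partially linear extension `P(M,A)` for some antichain
`A` of `P` and some nonempty `M ⊆ A`. -/
def Step (P Q : FinPoset) : Prop :=
  (∃ b : Fin P.n, P.Removable b ∧
    ∃ e : Fin Q.n ≃ {u : Fin P.n // u ≠ b},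
      ∀ a a' : Fin Q.n, Q.le a a' ↔ P.le (e a).1 (e a').1) ∨
  (∃ A M : Finset (Fin P.n), P.IsAntichain' A ∧ M ⊆ A ∧ M.Nonempty ∧
    ∃ e : Fin Q.n ≃ Option {u : Fin P.n // u ∉ M},
      ∀ a a' : Fin Q.n, Q.le a a' ↔ P.pleRel A M (e a) (e a'))

end FinPoset

/-!
Gluing the members of an antichain `A` with at least two elements, i.e. passing to `P(A,A)`,
decreases the number of elements. If no such antichain exists, then `P` is a chain, and in a chain
every element is removable. So every nonempty poset admits a step to a smaller one.
-/

open scoped SetRel in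
theorem exists_relSeries_of_forall_exists_lt {α β : Type*} [LT β] [WellFoundedLT β]
    {r : SetRel α α} {p : α → Prop} (f : α → β)
    (h : ∀ a, ¬ p a → ∃ b, a ~[r] b ∧ f b < f a) (a : α) :
    ∃ s : RelSeries r, s.head = a ∧ p s.last := by
  induction a using (InvImage.wf f wellFounded_lt).induction with
  | _ a ih =>
    by_cases ha : p a
    · exact ⟨RelSeries.singleton r a, rfl, ha⟩
    · obtain ⟨b, hab, hlt⟩ := h a ha
      obtain ⟨s, rfl, hlast⟩ := ih b hlt
      exact ⟨s.cons a hab, s.head_cons a hab, (s.last_cons a hab).symm ▸ hlast⟩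

instance {α : Type*} (r : α → α → Prop) [IsPartialOrder α r] (p : α → Prop) :
    IsPartialOrder (Subtype p) (Subrel r p) :=
  (Subrel.relEmbedding r p).isPartialOrder

namespace FinPoset

/-- The finite poset given by a partial order `r` on an arbitrary finite type, transported to
`Fin n` along an arbitrary enumeration of the type. -/
noncomputable def ofRel {α : Type*} [Fintype α] (r : α → α → Prop) [IsPartialOrder α r] :
    FinPoset where
  n := Fintype.card α
  le := (Fintype.equivFin α).symm ⁻¹'o r
  le_refl _ := refl_of r _
  le_antisymm _ _ hab hba := (Fintype.equivFin α).symm.injective (antisymm_of r hab hba)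
  le_trans _ _ _ := trans_of r

/-- The relation isomorphism from `ofRel r` to `r` given by the enumeration. -/
noncomputable def ofRelIso {α : Type*} [Fintype α] (r : α → α → Prop) [IsPartialOrder α r] :
    (ofRel r).le ≃r r :=
  RelIso.preimage (Fintype.equivFin α).symm r

variable {P : FinPoset} {A M : Finset (Fin P.n)}

instance : IsPartialOrder (Fin P.n) P.le where
  refl := P.le_refl
  antisymm := P.le_antisymm
  trans := P.le_trans

section Deletion

variable {b : Fin P.n}

/-- The induced subposet `P∖{b}`. -/
noncomputable def delete (P : FinPoset) (b : Fin P.n) : FinPoset :=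
  ofRel (Subrel P.le (· ≠ b))

theorem delete_n_lt : (P.delete b).n < P.n :=
  calc Fintype.card {u // u ≠ b} < Fintype.card (Fin P.n) :=
        Fintype.card_subtype_lt (not_not.2 rfl : ¬ b ≠ b)
    _ = P.n := Fintype.card_fin P.n

theorem Removable.step_delete (hb : P.Removable b) : P.Step (P.delete b) :=
  let e := ofRelIso (Subrel P.le (· ≠ b))
  .inl ⟨b, hb, e.toEquiv, fun _ _ => e.map_rel_iff.symm⟩

theorem subsingleton_covers_left_of_isChain (h : IsChain P.le {x | P.lt x b}) :
    {x | P.covers x b}.Subsingleton := by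
  intro x hx y hy
  by_contra hne
  rcases h hx.1 hy.1 hne with hxy | hyx
  · exact hx.2 ⟨y, ⟨hxy, hne⟩, hy.1⟩
  · exact hy.2 ⟨x, ⟨hyx, Ne.symm hne⟩, hx.1⟩

theorem subsingleton_covers_right_of_isChain (h : IsChain P.le {x | P.lt b x}) :
    {x | P.covers b x}.Subsingleton := by
  intro x hx y hy
  by_contra hne
  rcases h hx.1 hy.1 hne with hxy | hyx
  · exact hy.2 ⟨x, hx.1, ⟨hxy, hne⟩⟩
  · exact hx.2 ⟨y, hy.1, ⟨hyx, Ne.symm hne⟩⟩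

theorem removable_of_isChain_univ (h : IsChain P.le Set.univ) (b : Fin P.n) : P.Removable b :=
  ⟨subsingleton_covers_left_of_isChain (h.mono (Set.subset_univ _)),
    subsingleton_covers_right_of_isChain (h.mono (Set.subset_univ _))⟩

end Deletion

section PartiallyLinearExtension

theorem isAntichain'_iff : P.IsAntichain' A ↔ IsAntichain P.le (A : Set (Fin P.n)) :=
  ⟨fun h _ hx _ hy => h _ hx _ hy, fun h _ hx _ hy => h hx hy⟩

theorem isAntichain'_pair {x y : Fin P.n} (hxy : ¬ P.le x y) (hyx : ¬ P.le y x) :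
    P.IsAntichain' {x, y} := by
  rw [isAntichain'_iff, Finset.coe_pair]
  exact Set.pairwise_pair.2 fun _ => ⟨hxy, hyx⟩

theorem pleRel_some_some_iff {x y : {u : Fin P.n // u ∉ M}} :
    P.pleRel A M (some x) (some y) ↔
      P.le x y ∨ P.pleRel A M (some x) none ∧ P.pleRel A M none (some y) :=
  or_congr_right
    ⟨fun ⟨a, ha, m, hm, hxa, hmy⟩ => ⟨⟨a, ha, hxa⟩, m, hm, hmy⟩,
      fun ⟨⟨a, ha, hxa⟩, m, hm, hmy⟩ => ⟨a, ha, m, hm, hxa, hmy⟩⟩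

theorem pleRel_some_none_of_le {x y : {u : Fin P.n // u ∉ M}} (hxy : P.le x y) :
    P.pleRel A M (some y) none → P.pleRel A M (some x) none
  | ⟨a, ha, hya⟩ => ⟨a, ha, P.le_trans _ _ _ hxy hya⟩

theorem pleRel_none_some_of_le {x y : {u : Fin P.n // u ∉ M}} (hxy : P.le x y) :
    P.pleRel A M none (some x) → P.pleRel A M none (some y)
  | ⟨m, hm, hmx⟩ => ⟨m, hm, P.le_trans _ _ _ hmx hxy⟩

instance : Std.Refl (P.pleRel A M) where
  refl
    | none => trivial
    | some x => .inl (P.le_refl x)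

instance : IsTrans _ (P.pleRel A M) where
  trans
    | none, none, _, _, hbc => hbc
    | _, none, none, hab, _ => hab
    | none, some _, none, _, _ => trivial
    | some _, none, some _, hab, hbc => pleRel_some_some_iff.2 (.inr ⟨hab, hbc⟩)
    | none, some _, some _, hab, hbc => by
      rcases pleRel_some_some_iff.1 hbc with hle | ⟨-, hc⟩
      exacts [pleRel_none_some_of_le hle hab, hc]
    | some _, some _, none, hab, hbc => by
      rcases pleRel_some_some_iff.1 hab with hle | ⟨ha, -⟩
      exacts [pleRel_some_none_of_le hle hbc, ha]
    | some _, some _, some _, hab, hbc => by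
      rw [pleRel_some_some_iff] at hab hbc ⊢
      rcases hab with hab | ⟨ha, hb⟩
      · exact hbc.imp (P.le_trans _ _ _ hab) (.imp_left (pleRel_some_none_of_le hab))
      · exact .inr ⟨ha, hbc.elim (pleRel_none_some_of_le · hb) And.right⟩

theorem IsAntichain'.not_pleRel_none_some (hA : P.IsAntichain' A) (hMA : M ⊆ A)
    {x : {u : Fin P.n // u ∉ M}} :
    P.pleRel A M (some x) none → ¬ P.pleRel A M none (some x) := by
  rintro ⟨a, ha, hxa⟩ ⟨m, hm, hmx⟩
  obtain rfl : m = a := (isAntichain'_iff.1 hA).eq (hMA hm) ha (P.le_trans _ _ _ hmx hxa)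
  exact x.2 (P.le_antisymm _ _ hmx hxa ▸ hm)

theorem IsAntichain'.antisymm_pleRel (hA : P.IsAntichain' A) (hMA : M ⊆ A) :
    Std.Antisymm (P.pleRel A M) where
  antisymm
    | none, none, _, _ => rfl
    | none, some _, hab, hba => absurd hab (hA.not_pleRel_none_some hMA hba)
    | some _, none, hab, hba => absurd hba (hA.not_pleRel_none_some hMA hab)
    | some x, some y, hab, hba => by
      rcases pleRel_some_some_iff.1 hab with hxy | ⟨hx, hy⟩
      · rcases pleRel_some_some_iff.1 hba with hyx | ⟨hy, hx⟩
        · exact congrArg some (Subtype.ext (P.le_antisymm _ _ hxy hyx))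
        · exact absurd hx (hA.not_pleRel_none_some hMA (trans_of _ hab hy))
      · exact absurd (trans_of _ hy hba) (hA.not_pleRel_none_some hMA hx)

theorem IsAntichain'.isPartialOrder_pleRel (hA : P.IsAntichain' A) (hMA : M ⊆ A) :
    IsPartialOrder _ (P.pleRel A M) :=
  { hA.antisymm_pleRel hMA with }

/-- The partially linear extension `P(M,A)`. -/
noncomputable def partiallyLinearExtension (P : FinPoset) {A M : Finset (Fin P.n)}
    (hA : P.IsAntichain' A) (hMA : M ⊆ A) : FinPoset :=
  have := hA.isPartialOrder_pleRel hMA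
  ofRel (P.pleRel A M)

theorem partiallyLinearExtension_n_add_card (hA : P.IsAntichain' A) (hMA : M ⊆ A) :
    (P.partiallyLinearExtension hA hMA).n + M.card = P.n + 1 := by
  have hcard : Fintype.card {u // u ∉ M} + M.card = P.n := by
    rw [Fintype.card_subtype_compl, Fintype.card_coe, Fintype.card_fin,
      Nat.sub_add_cancel (card_finset_fin_le M)]
  calc Fintype.card (Option {u // u ∉ M}) + M.card
      = Fintype.card {u // u ∉ M} + M.card + 1 := by rw [Fintype.card_option, add_right_comm]
    _ = P.n + 1 := by rw [hcard]

theorem partiallyLinearExtension_n_lt (hA : P.IsAntichain' A) (hMA : M ⊆ A) (hM : 1 < M.card) :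
    (P.partiallyLinearExtension hA hMA).n < P.n := by
  have := partiallyLinearExtension_n_add_card hA hMA
  lia

theorem step_partiallyLinearExtension (hA : P.IsAntichain' A) (hMA : M ⊆ A) (hM : M.Nonempty) :
    P.Step (P.partiallyLinearExtension hA hMA) :=
  have := hA.isPartialOrder_pleRel hMA
  let e := ofRelIso (P.pleRel A M)
  .inr ⟨A, M, hA, hMA, hM, e.toEquiv, fun _ _ => e.map_rel_iff.symm⟩

end PartiallyLinearExtension

theorem exists_step_n_lt (P : FinPoset) (hP : P.n ≠ 0) : ∃ Q, P.Step Q ∧ Q.n < P.n := by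
  by_cases hchain : IsChain P.le Set.univ
  · have hb := removable_of_isChain_univ hchain ⟨0, Nat.pos_of_ne_zero hP⟩
    exact ⟨_, hb.step_delete, delete_n_lt⟩
  · obtain ⟨x, y, hne, hxy, hyx⟩ : ∃ x y, x ≠ y ∧ ¬ P.le x y ∧ ¬ P.le y x := by
      simpa [IsChain, Set.Pairwise] using hchain
    have hA : P.IsAntichain' {x, y} := isAntichain'_pair hxy hyx
    have hcard : 1 < ({x, y} : Finset (Fin P.n)).card := by simp [Finset.card_pair hne]
    exact ⟨_, step_partiallyLinearExtension hA subset_rfl (Finset.insert_nonempty x {y}),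
      partiallyLinearExtension_n_lt hA subset_rfl hcard⟩

end FinPoset

/-- Every finite poset can be reduced to the empty poset by finitely many
deletions and partially linear extensions. -/
theorem reduction_to_empty (P : FinPoset) :
    ∃ (k : ℕ) (Ps : Fin (k + 1) → FinPoset),
      Ps 0 = P ∧ (Ps (Fin.last k)).n = 0 ∧
      ∀ i : Fin k, FinPoset.Step (Ps i.castSucc) (Ps i.succ) := by
  obtain ⟨s, hhead, hlast⟩ :=
    exists_relSeries_of_forall_exists_lt (r := {p | p.1.Step p.2}) FinPoset.n
      FinPoset.exists_step_n_lt P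
  exact ⟨s.length, s, hhead, hlast, s.step⟩
end

section
/- Let P, Q, S be posets, R₁ ⊆ P × Q and R₂ ⊆ Q × S. View R₂ as a subset of (P ⊕_{R₁} Q) × S via the inclusion of Q into the disjoint union, and view R₁ as a subset of P × (Q ⊕_{R₂} S) via the inclusion of Q into the disjoint union. Then the identity map on the disjoint union of P, Q, S is an order isomorphism (P ⊕_{R₁} Q) ⊕_{R₂} S ≅ P ⊕_{R₁} (Q ⊕_{R₂} S); i.e. the partially ordinal sum is associative. -/
/-- The relation of the partially ordinal sum `P ⊕_R Q` on the disjoint union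
of `P` and `Q`, where `P` carries the relation `lp` and `Q` the relation `lq`. -/
def osumRel {α β : Type*} (lp : α → α → Prop) (lq : β → β → Prop) (R : Set (α × β)) :
    α ⊕ β → α ⊕ β → Prop
  | Sum.inl x, Sum.inl y => lp x y
  | Sum.inr x, Sum.inr y => lq x y
  | Sum.inl x, Sum.inr y => ∃ r ∈ R, lp x r.1 ∧ lq r.2 y
  | Sum.inr _, Sum.inl _ => False

/-! Only comparisons from `α` to `γ` involve both `R₁` and `R₂`. In either bracketing they are
witnessed by the same chains `a ≤ p.1`, `p.2 ≤ q.1`, `q.2 ≤ c` with `p ∈ R₁` and `q ∈ R₂`, so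
associativity reduces to reordering these witnesses. -/

section

open Sum

variable {α β γ : Type*} {la : α → α → Prop} {lb : β → β → Prop} {lc : γ → γ → Prop}
  {R₁ : Set (α × β)} {R₂ : Set (β × γ)}

theorem osumRel_image_inl_inr {ι : Type*} {f : ι → α × β} {s : Set ι} {a : α} {b : β} :
    osumRel la lb (f '' s) (inl a) (inr b) ↔ ∃ i ∈ s, la a (f i).1 ∧ lb (f i).2 b :=
  Set.exists_mem_image

theorem osumRel_osumRel_left_iff_exists_chain {a : α} {c : γ} :
    osumRel (osumRel la lb R₁) lc ((fun q : β × γ => ((inr q.1 : α ⊕ β), q.2)) '' R₂)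
        (inl (inl a)) (inr c) ↔
      ∃ p ∈ R₁, ∃ q ∈ R₂, la a p.1 ∧ lb p.2 q.1 ∧ lc q.2 c := by
  rw [osumRel_image_inl_inr]
  constructor
  · rintro ⟨q, hq, ⟨p, hp, hap, hpq⟩, hqc⟩
    exact ⟨p, hp, q, hq, hap, hpq, hqc⟩
  · rintro ⟨p, hp, q, hq, hap, hpq, hqc⟩
    exact ⟨q, hq, ⟨p, hp, hap, hpq⟩, hqc⟩

theorem osumRel_osumRel_right_iff_exists_chain {a : α} {c : γ} :
    osumRel la (osumRel lb lc R₂) ((fun p : α × β => (p.1, (inl p.2 : β ⊕ γ))) '' R₁)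
        (inl a) (inr (inr c)) ↔
      ∃ p ∈ R₁, ∃ q ∈ R₂, la a p.1 ∧ lb p.2 q.1 ∧ lc q.2 c := by
  rw [osumRel_image_inl_inr]
  constructor
  · rintro ⟨p, hp, hap, q, hq, hpq, hqc⟩
    exact ⟨p, hp, q, hq, hap, hpq, hqc⟩
  · rintro ⟨p, hp, q, hq, hap, hpq, hqc⟩
    exact ⟨p, hp, hap, q, hq, hpq, hqc⟩

theorem osum_assoc_general (la : α → α → Prop) (lb : β → β → Prop) (lc : γ → γ → Prop)
    (R₁ : Set (α × β)) (R₂ : Set (β × γ)) :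
    ∀ x y : (α ⊕ β) ⊕ γ,
      osumRel (osumRel la lb R₁) lc
          ((fun p : β × γ => ((inr p.1 : α ⊕ β), p.2)) '' R₂) x y ↔
        osumRel la (osumRel lb lc R₂)
          ((fun p : α × β => (p.1, (inl p.2 : β ⊕ γ))) '' R₁)
          (Equiv.sumAssoc α β γ x) (Equiv.sumAssoc α β γ y)
  | inl (inl _), inl (inl _) => Iff.rfl
  | inl (inl _), inl (inr _) => Iff.symm osumRel_image_inl_inr
  | inl (inl _), inr _ =>
      osumRel_osumRel_left_iff_exists_chain.trans osumRel_osumRel_right_iff_exists_chain.symm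
  | inl (inr _), inl (inl _) => Iff.rfl
  | inl (inr _), inl (inr _) => Iff.rfl
  | inl (inr _), inr _ => osumRel_image_inl_inr
  | inr _, inl (inl _) => Iff.rfl
  | inr _, inl (inr _) => Iff.rfl
  | inr _, inr _ => Iff.rfl

end

/-- Associativity of the partially ordinal sum: for posets `P, Q, S`,
`R₁ ⊆ P × Q` and `R₂ ⊆ Q × S`, viewing `R₂ ⊆ (P ⊕_{R₁} Q) × S` and
`R₁ ⊆ P × (Q ⊕_{R₂} S)` via the inclusions of `Q`, the identity map of the
disjoint union (i.e. `Equiv.sumAssoc`) is an order isomorphism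
`(P ⊕_{R₁} Q) ⊕_{R₂} S ≅ P ⊕_{R₁} (Q ⊕_{R₂} S)`. -/
theorem osum_assoc {α β γ : Type*} [PartialOrder α] [PartialOrder β] [PartialOrder γ]
    (R₁ : Set (α × β)) (R₂ : Set (β × γ)) :
    ∀ x y : (α ⊕ β) ⊕ γ,
      osumRel (osumRel (· ≤ ·) (· ≤ ·) R₁) (· ≤ ·)
          ((fun p : β × γ => ((Sum.inr p.1 : α ⊕ β), p.2)) '' R₂) x y ↔
        osumRel (· ≤ ·) (osumRel (· ≤ ·) (· ≤ ·) R₂)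
          ((fun p : α × β => (p.1, (Sum.inl p.2 : β ⊕ γ))) '' R₁)
          (Equiv.sumAssoc α β γ x) (Equiv.sumAssoc α β γ y) :=
  osum_assoc_general (· ≤ ·) (· ≤ ·) (· ≤ ·) R₁ R₂
end

section
/- Let C be a nonempty finite chain, P a finite poset, and R' ⊆ C × P. If no element of C is removable in the partially ordinal sum C ⊕_{R'} P, then |C| < |P|. -/
/-- `b` covers `a` with respect to the relation `r`: `a` is strictly below `b`
and nothing is strictly between them. -/
def relCovBy {γ : Type*} (r : γ → γ → Prop) (a b : γ) : Prop :=
  (r a b ∧ a ≠ b) ∧ ¬ ∃ c, (r a c ∧ a ≠ c) ∧ (r c b ∧ c ≠ b)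

/-- `b` is removable with respect to the relation `r`: it covers at most one
element and is covered by at most one element. -/
def relRemovable {γ : Type*} (r : γ → γ → Prop) (b : γ) : Prop :=
  {x | relCovBy r x b}.Subsingleton ∧ {x | relCovBy r b x}.Subsingleton

/-!
Two comparable elements that are covered by a common element, or that cover a common element, are
equal; in a partially ordinal sum over a chain `C` this applies to any two elements of `C`. As
nothing in `P` lies below an element of `C`, each element of `C` has at most one lower cover, so a
non-removable one has two upper covers, at least one of them in `P`. Choosing such a cover for each
element of `C` gives an injection `C ↪ P`. Both upper covers of a greatest element of `C` lie in
`P`, and the one that was not chosen is missed by the injection. If `C` is infinite, the injection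
alone suffices, since then `|C| + 1 = |C|`.
-/

namespace relCovBy

section Relation

variable {γ : Type*} {r : γ → γ → Prop} {x y z : γ}

lemma unique_left_of_rel (hx : relCovBy r x z) (hy : relCovBy r y z) (hxy : r x y) : x = y := by
  by_contra hne
  exact hx.2 ⟨y, ⟨hxy, hne⟩, hy.1⟩

lemma unique_right_of_rel (hx : relCovBy r z x) (hy : relCovBy r z y) (hxy : r x y) : x = y := by
  by_contra hne
  exact hy.2 ⟨x, hx.1, hxy, hne⟩

end Relation

section Chain

variable {C P : Type*} [LinearOrder C] {lq : P → P → Prop} {R : Set (C × P)} {a b : C}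
  {z : C ⊕ P}

lemma unique_left_inl (ha : relCovBy (osumRel (· ≤ ·) lq R) (.inl a) z)
    (hb : relCovBy (osumRel (· ≤ ·) lq R) (.inl b) z) : a = b := by
  rcases le_total a b with hab | hba
  · exact Sum.inl_injective (ha.unique_left_of_rel hb hab)
  · exact Sum.inl_injective (hb.unique_left_of_rel ha hba).symm

lemma unique_right_inl (ha : relCovBy (osumRel (· ≤ ·) lq R) z (.inl a))
    (hb : relCovBy (osumRel (· ≤ ·) lq R) z (.inl b)) : a = b := by
  rcases le_total a b with hab | hba
  · exact Sum.inl_injective (ha.unique_right_of_rel hb hab)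
  · exact Sum.inl_injective (hb.unique_right_of_rel ha hba).symm

end Chain

end relCovBy

section ChainSum

lemma not_relCovBy_inr_inl {α β : Type*} {lp : α → α → Prop} {lq : β → β → Prop}
    {R : Set (α × β)} {a : α} {b : β} : ¬ relCovBy (osumRel lp lq R) (.inr b) (.inl a) :=
  fun h => h.1.1

lemma not_relCovBy_inl_inl_of_isMax {α β : Type*} [PartialOrder α] {lq : β → β → Prop}
    {R : Set (α × β)} {m a : α} (hm : IsMax m) :
    ¬ relCovBy (osumRel (· ≤ ·) lq R) (.inl m) (.inl a) :=
  fun h => h.1.2 (congrArg Sum.inl (hm.eq_of_le h.1.1))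

variable {C P : Type*} [LinearOrder C] {lq : P → P → Prop} {R : Set (C × P)} {c : C}

lemma subsingleton_setOf_relCovBy_inl :
    {x | relCovBy (osumRel (· ≤ ·) lq R) x (.inl c)}.Subsingleton := by
  rintro (a | p) hx (b | q) hy
  · exact congrArg Sum.inl (relCovBy.unique_left_inl hx hy)
  · exact (not_relCovBy_inr_inl hy).elim
  · exact (not_relCovBy_inr_inl hx).elim
  · exact (not_relCovBy_inr_inl hx).elim

lemma nontrivial_setOf_relCovBy_of_not_relRemovable
    (h : ¬ relRemovable (osumRel (· ≤ ·) lq R) (.inl c)) :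
    {x | relCovBy (osumRel (· ≤ ·) lq R) (.inl c) x}.Nontrivial :=
  Set.not_subsingleton_iff.mp fun hsub => h ⟨subsingleton_setOf_relCovBy_inl, hsub⟩

lemma exists_relCovBy_inr_of_not_relRemovable
    (h : ¬ relRemovable (osumRel (· ≤ ·) lq R) (.inl c)) :
    ∃ p, relCovBy (osumRel (· ≤ ·) lq R) (.inl c) (.inr p) := by
  obtain ⟨a | p, hx, b | q, hy, hne⟩ := nontrivial_setOf_relCovBy_of_not_relRemovable h
  · exact (hne (congrArg Sum.inl (relCovBy.unique_right_inl hx hy))).elim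
  · exact ⟨q, hy⟩
  · exact ⟨p, hx⟩
  · exact ⟨p, hx⟩

lemma exists_ne_relCovBy_inr_of_isMax (hc : IsMax c)
    (h : ¬ relRemovable (osumRel (· ≤ ·) lq R) (.inl c)) (p : P) :
    ∃ q ≠ p, relCovBy (osumRel (· ≤ ·) lq R) (.inl c) (.inr q) := by
  obtain ⟨a | q, hx, hne⟩ :=
    (nontrivial_setOf_relCovBy_of_not_relRemovable h).exists_ne (.inr p)
  · exact (not_relCovBy_inl_inl_of_isMax hc hx).elim
  · exact ⟨q, fun hqp => hne (congrArg Sum.inr hqp), hx⟩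

lemma exists_embedding_relCovBy_of_forall_not_relRemovable
    (h : ∀ c : C, ¬ relRemovable (osumRel (· ≤ ·) lq R) (.inl c)) :
    ∃ f : C ↪ P, ∀ c, relCovBy (osumRel (· ≤ ·) lq R) (.inl c) (.inr (f c)) := by
  choose f hf using fun c => exists_relCovBy_inr_of_not_relRemovable (h c)
  exact ⟨⟨f, fun a b hab => (hf a).unique_left_inl (hab ▸ hf b)⟩, hf⟩

lemma exists_notMem_range_of_isMax {f : C → P}
    (hf : ∀ c, relCovBy (osumRel (· ≤ ·) lq R) (.inl c) (.inr (f c))) (hc : IsMax c)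
    (h : ¬ relRemovable (osumRel (· ≤ ·) lq R) (.inl c)) : ∃ q, q ∉ Set.range f := by
  obtain ⟨q, hne, hq⟩ := exists_ne_relCovBy_inr_of_isMax hc h (f c)
  refine ⟨q, ?_⟩
  rintro ⟨a, rfl⟩
  exact hne (congrArg f ((hf a).unique_left_inl hq))

end ChainSum

open Cardinal in
theorem card_lt_of_no_removable_general.{u, v} {C : Type u} {P : Type v} [LinearOrder C]
    [Nonempty C] (lq : P → P → Prop) (R : Set (C × P))
    (h : ∀ c : C, ¬ relRemovable (osumRel (· ≤ ·) lq R) (.inl c)) :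
    lift.{v} #C + 1 ≤ lift.{u} #P := by
  obtain ⟨f, hf⟩ := exists_embedding_relCovBy_of_forall_not_relRemovable h
  rcases finite_or_infinite C with _ | _
  · obtain ⟨m, hm⟩ := Finite.exists_max (id : C → C)
    obtain ⟨q, hq⟩ := exists_notMem_range_of_isMax hf (fun a _ => hm a) (h m)
    simpa using lift_mk_le'.mpr ⟨f.optionElim q hq⟩
  · rw [add_one_eq (by simp)]
    exact lift_mk_le'.mpr ⟨f⟩

/-- If `C` is a nonempty finite chain, `P` a finite poset and `R' ⊆ C × P` is
such that no element of `C` is removable in the partially ordinal sum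
`C ⊕_{R'} P`, then `|C| < |P|`. -/
theorem card_lt_of_no_removable {C P : Type*} [Fintype C] [LinearOrder C] [Nonempty C]
    [Fintype P] [PartialOrder P] (R' : Set (C × P))
    (h : ∀ c : C, ¬ relRemovable (osumRel (· ≤ ·) (· ≤ ·) R') (Sum.inl c)) :
    Fintype.card C < Fintype.card P := by
  have hcard := card_lt_of_no_removable_general (· ≤ ·) R' h
  simp only [Cardinal.mk_fintype, Cardinal.lift_natCast] at hcard
  exact Nat.add_one_le_iff.mp (mod_cast hcard)
end

section
/- Let D be the Diamond poset. Then f_D · (1 − x₁)(1 − x₁x₂)(1 − x₁x₃)(1 − x₁x₂x₃)(1 − x₁x₂x₃x₄) = 1 − x₁²x₂x₃ as an identity of formal power series in ℤ[[x₁, x₂, x₃, x₄]]. -/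
open MvPowerSeries

open Classical in
/-- The order of the Diamond poset on `{1,2,3,4}` (here represented by
`Fin 4 = {0,1,2,3}`): `1 < 2 < 4`, `1 < 3 < 4`, with `2` and `3` incomparable. -/
def diamondLe (x y : Fin 4) : Prop := x = y ∨ x = 0 ∨ y = 3

open Classical in
/-- The generating function of `D`-partitions of the Diamond poset, in the
variables `x₁, x₂, x₃, x₄` (represented by `X 0, X 1, X 2, X 3`). -/
noncomputable def fD : MvPowerSeries (Fin 4) ℤ :=
  fun d => if ∀ x y : Fin 4, diamondLe x y → d y ≤ d x then 1 else 0

/-!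
Stanley's decomposition: a partition `d` of the Diamond has either `d 2 ≤ d 1` or `d 1 < d 2`, so it
is a partition of the chain `0 < 1 < 2 < 3`, or `e₀ + e₂` plus a partition of the chain
`0 < 2 < 1 < 3`. Partitions of a chain form the free commutative monoid on the indicators of its
nonempty initial segments, so `f_D` is a sum of two products of geometric series:

`1 / ((1-x₀)(1-x₀x₁)(1-x₀x₁x₂)(1-x₀x₁x₂x₃)) + x₀x₂ / ((1-x₀)(1-x₀x₂)(1-x₀x₁x₂)(1-x₀x₁x₂x₃))`.
-/

section IndicatorSeries

variable {σ R : Type*}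

variable (R) in
/-- The generating function `∑_{d ∈ S} x ^ d` of a set `S` of exponents. -/
noncomputable def indicatorSeries [Semiring R] (S : Set (σ →₀ ℕ)) : MvPowerSeries σ R :=
  S.indicator 1

open Classical in
theorem coeff_indicatorSeries [Semiring R] (S : Set (σ →₀ ℕ)) (d : σ →₀ ℕ) :
    coeff d (indicatorSeries R S) = if d ∈ S then 1 else 0 := by
  rw [coeff_apply, indicatorSeries, Set.indicator_apply, Pi.one_apply]

theorem indicatorSeries_singleton_zero [Semiring R] :
    indicatorSeries R {(0 : σ →₀ ℕ)} = 1 := by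
  classical
  ext d
  simp only [coeff_indicatorSeries, coeff_one, Set.mem_singleton_iff]

theorem indicatorSeries_union [Semiring R] {S T : Set (σ →₀ ℕ)} (h : Disjoint S T) :
    indicatorSeries R (S ∪ T) = indicatorSeries R S + indicatorSeries R T :=
  Set.indicator_union_of_disjoint h 1

theorem indicatorSeries_image_add [Semiring R] (e : σ →₀ ℕ) (S : Set (σ →₀ ℕ)) :
    indicatorSeries R ((e + ·) '' S) = monomial e 1 * indicatorSeries R S := by
  classical
  ext d
  rw [coeff_monomial_mul, coeff_indicatorSeries]
  by_cases hed : e ≤ d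
  · obtain ⟨c, rfl⟩ := exists_add_of_le hed
    simp [coeff_indicatorSeries]
  · have hd : d ∉ (e + ·) '' S := by
      rintro ⟨c, -, rfl⟩
      exact hed le_self_add
    rw [if_neg hd, if_neg hed]

theorem one_sub_monomial_mul_indicatorSeries [Ring R] {S T : Set (σ →₀ ℕ)} {e : σ →₀ ℕ}
    (hS : S = T ∪ (e + ·) '' S) (hT : Disjoint T ((e + ·) '' S)) :
    (1 - monomial e 1) * indicatorSeries R S = indicatorSeries R T := by
  have h := congrArg (indicatorSeries R) hS
  rw [indicatorSeries_union hT, indicatorSeries_image_add] at h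
  rw [sub_mul, one_mul, sub_eq_iff_eq_add, ← h]

end IndicatorSeries

section Chain

variable {ι σ R : Type*} [LinearOrder ι]

/-- The partitions of a chain, as a set of exponents; the chain is the set `σ` of variables with the
order transported from `ι` along `w`. -/
def chainPartitions (w : ι ≃ σ) : Set (σ →₀ ℕ) :=
  {d | Antitone (d ∘ w)}

/-- The partitions of the chain `w` whose support lies in the image of `s`, used to add the elements
of the chain one at a time. -/
def chainPartitionsOn (w : ι ≃ σ) (s : Finset ι) : Set (σ →₀ ℕ) :=
  {d ∈ chainPartitions w | ∀ i ∉ s, d (w i) = 0}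

theorem chainPartitionsOn_empty (w : ι ≃ σ) : chainPartitionsOn w ∅ = {0} := by
  ext d
  constructor
  · rintro ⟨-, hd⟩
    ext x
    simpa using hd (w.symm x) (Finset.notMem_empty _)
  · rintro rfl
    exact ⟨fun _ _ _ => le_rfl, fun _ _ => rfl⟩

theorem chainPartitionsOn_univ [Fintype ι] (w : ι ≃ σ) :
    chainPartitionsOn w Finset.univ = chainPartitions w := by
  simp [chainPartitionsOn]

variable [LocallyFiniteOrderBot ι]

/-- The indicator of the initial segment `Iic a` of the chain `w`, as an exponent; these are the
free generators of the monoid of partitions of the chain. -/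
noncomputable def initialSegment (w : ι ≃ σ) (a : ι) : σ →₀ ℕ :=
  ∑ i ∈ Finset.Iic a, Finsupp.single (w i) 1

theorem initialSegment_apply (w : ι ≃ σ) (a i : ι) :
    initialSegment w a (w i) = if i ≤ a then 1 else 0 := by
  classical
  simp [initialSegment, Finsupp.finsetSum_apply, Finsupp.single_apply]

theorem monomial_initialSegment [CommSemiring R] (w : ι ≃ σ) (a : ι) :
    monomial (initialSegment w a) (1 : R) = ∏ i ∈ Finset.Iic a, X (w i) := by
  simp only [X_def, prod_monomial, Finset.prod_const_one, initialSegment]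

theorem initialSegment_add_mem_chainPartitionsOn_iff (w : ι ≃ σ) (a : ι) (c : σ →₀ ℕ) :
    initialSegment w a + c ∈ chainPartitionsOn w (Finset.Iic a) ↔
      c ∈ chainPartitionsOn w (Finset.Iic a) := by
  have hle {i : ι} (hi : i ≤ a) : (initialSegment w a + c) (w i) = 1 + c (w i) := by
    rw [Finsupp.add_apply, initialSegment_apply, if_pos hi]
  have hgt {i : ι} (hi : i ∉ Finset.Iic a) : (initialSegment w a + c) (w i) = c (w i) := by
    rw [Finsupp.add_apply, initialSegment_apply, if_neg (mt Finset.mem_Iic.mpr hi), zero_add]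
  have hzero : (∀ i ∉ Finset.Iic a, (initialSegment w a + c) (w i) = 0) ↔
      ∀ i ∉ Finset.Iic a, c (w i) = 0 :=
    forall₂_congr fun i hi => by rw [hgt hi]
  refine (and_congr_right' hzero).trans (and_congr_left fun hc => ?_)
  refine forall_congr' fun i => forall₂_congr fun j hij => ?_
  simp only [Function.comp_apply]
  by_cases hj : j ∈ Finset.Iic a
  · have hja := Finset.mem_Iic.mp hj
    rw [hle hja, hle (hij.trans hja), Nat.add_le_add_iff_left]
  · simp only [hgt hj, hc j hj, Nat.zero_le]

theorem initialSegment_le {w : ι ≃ σ} {a : ι} {d : σ →₀ ℕ} (hd : d ∈ chainPartitions w)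
    (ha : d (w a) ≠ 0) : initialSegment w a ≤ d := by
  refine w.surjective.forall.mpr fun i => ?_
  rw [initialSegment_apply]
  split_ifs with hia
  · exact (Nat.one_le_iff_ne_zero.mpr ha).trans (hd hia)
  · exact Nat.zero_le _

theorem chainPartitionsOn_Iic_eq_union (w : ι ≃ σ) (a : ι) :
    chainPartitionsOn w (Finset.Iic a) = chainPartitionsOn w (Finset.Iio a) ∪
      (initialSegment w a + ·) '' chainPartitionsOn w (Finset.Iic a) := by
  ext d
  constructor
  · intro hd
    by_cases ha : d (w a) = 0
    · left
      refine ⟨hd.1, fun i hi => ?_⟩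
      rcases (not_lt.mp (mt Finset.mem_Iio.mpr hi)).eq_or_lt with rfl | hai
      · exact ha
      · exact hd.2 i (by simpa using hai)
    · right
      obtain ⟨c, rfl⟩ := exists_add_of_le (initialSegment_le hd.1 ha)
      exact ⟨c, (initialSegment_add_mem_chainPartitionsOn_iff w a c).mp hd, rfl⟩
  · rintro (hd | ⟨c, hc, rfl⟩)
    · exact ⟨hd.1, fun i hi => hd.2 i (mt (Finset.Iio_subset_Iic_self ·) hi)⟩
    · exact (initialSegment_add_mem_chainPartitionsOn_iff w a c).mpr hc

theorem disjoint_chainPartitionsOn_Iio_image (w : ι ≃ σ) (a : ι) (S : Set (σ →₀ ℕ)) :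
    Disjoint (chainPartitionsOn w (Finset.Iio a)) ((initialSegment w a + ·) '' S) := by
  rw [Set.disjoint_left]
  rintro _ hd ⟨c, -, rfl⟩
  have h := hd.2 a (by simp)
  simp [initialSegment_apply] at h

theorem indicatorSeries_chainPartitionsOn_mul_prod [CommRing R] (w : ι ≃ σ) (s : Finset ι)
    (hs : IsLowerSet (s : Set ι)) :
    indicatorSeries R (chainPartitionsOn w s) *
      ∏ a ∈ s, (1 - ∏ i ∈ Finset.Iic a, X (w i)) = 1 := by
  induction s using Finset.induction_on_max with
  | empty =>
    rw [chainPartitionsOn_empty, indicatorSeries_singleton_zero, Finset.prod_empty, one_mul]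
  | insert a s hmax ih =>
    obtain rfl : s = Finset.Iio a := by
      ext i
      rw [Finset.mem_Iio]
      refine ⟨hmax i, fun hia => ?_⟩
      exact Finset.mem_of_mem_insert_of_ne (hs hia.le (Finset.mem_insert_self a s)) hia.ne
    have hpeel := one_sub_monomial_mul_indicatorSeries (R := R)
      (chainPartitionsOn_Iic_eq_union w a) (disjoint_chainPartitionsOn_Iio_image w a _)
    rw [Finset.prod_insert (by simp), Finset.Iio_insert, ← monomial_initialSegment,
      mul_left_comm, ← mul_assoc, hpeel]
    exact ih (by simpa using isLowerSet_Iio a)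

theorem indicatorSeries_chainPartitions_mul_prod [Fintype ι] [CommRing R] (w : ι ≃ σ) :
    indicatorSeries R (chainPartitions w) * ∏ a, (1 - ∏ i ∈ Finset.Iic a, X (w i)) = 1 := by
  rw [← chainPartitionsOn_univ]
  exact indicatorSeries_chainPartitionsOn_mul_prod w Finset.univ (by simp [isLowerSet_univ])

end Chain

section Diamond

theorem mem_chainPartitions_fin_four {σ : Type*} (w : Fin 4 ≃ σ) (d : σ →₀ ℕ) :
    d ∈ chainPartitions w ↔ d (w 1) ≤ d (w 0) ∧ d (w 2) ≤ d (w 1) ∧ d (w 3) ≤ d (w 2) := by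
  simp [chainPartitions, Fin.antitone_iff_succ_le, Fin.forall_fin_succ]

theorem indicatorSeries_chainPartitions_fin_four {σ R : Type*} [CommRing R] (w : Fin 4 ≃ σ) :
    indicatorSeries R (chainPartitions w) *
      ((1 - X (w 0)) * (1 - X (w 0) * X (w 1)) * (1 - X (w 0) * X (w 1) * X (w 2)) *
        (1 - X (w 0) * X (w 1) * X (w 2) * X (w 3))) = 1 := by
  have h0 : Finset.Iic (0 : Fin 4) = {0} := rfl
  have h1 : Finset.Iic (1 : Fin 4) = {0, 1} := rfl
  have h2 : Finset.Iic (2 : Fin 4) = {0, 1, 2} := rfl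
  have h3 : Finset.Iic (3 : Fin 4) = {0, 1, 2, 3} := rfl
  simpa [Fin.prod_univ_four, h0, h1, h2, h3, mul_assoc] using
    indicatorSeries_chainPartitions_mul_prod (R := R) w

theorem forall_diamondLe_iff (d : Fin 4 →₀ ℕ) :
    (∀ x y, diamondLe x y → d y ≤ d x) ↔ d 1 ≤ d 0 ∧ d 2 ≤ d 0 ∧ d 3 ≤ d 1 ∧ d 3 ≤ d 2 := by
  constructor
  · intro h
    exact ⟨h 0 1 (.inr (.inl rfl)), h 0 2 (.inr (.inl rfl)), h 1 3 (.inr (.inr rfl)),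
      h 2 3 (.inr (.inr rfl))⟩
  · rintro ⟨h10, h20, h31, h32⟩ x y (rfl | rfl | rfl)
    · exact le_rfl
    · fin_cases y
      exacts [le_rfl, h10, h20, h31.trans h10]
    · fin_cases x
      exacts [h31.trans h10, h31, h32, le_rfl]

theorem mem_chainPartitions_refl_iff (d : Fin 4 →₀ ℕ) :
    d ∈ chainPartitions (Equiv.refl (Fin 4)) ↔ d 1 ≤ d 0 ∧ d 2 ≤ d 1 ∧ d 3 ≤ d 2 :=
  mem_chainPartitions_fin_four _ d

theorem mem_chainPartitions_swap_iff (d : Fin 4 →₀ ℕ) :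
    d ∈ chainPartitions (Equiv.swap 1 2) ↔ d 2 ≤ d 0 ∧ d 1 ≤ d 2 ∧ d 3 ≤ d 1 :=
  mem_chainPartitions_fin_four _ d

theorem mem_image_add_chainPartitions_swap_iff (d : Fin 4 →₀ ℕ) :
    d ∈ (Finsupp.single 0 1 + Finsupp.single 2 1 + ·) '' chainPartitions (Equiv.swap 1 2) ↔
      d 2 ≤ d 0 ∧ d 1 < d 2 ∧ d 3 ≤ d 1 := by
  constructor
  · rintro ⟨c, hc, rfl⟩
    rw [mem_chainPartitions_swap_iff] at hc
    simp only [Finsupp.add_apply, Finsupp.single_apply, Fin.reduceEq, if_true, if_false]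
    omega
  · intro hd
    have hle : Finsupp.single 0 1 + Finsupp.single 2 1 ≤ d := by
      intro i
      simp only [Finsupp.add_apply, Finsupp.single_apply]
      fin_cases i <;> grind
    obtain ⟨c, rfl⟩ := exists_add_of_le hle
    refine ⟨c, (mem_chainPartitions_swap_iff c).mpr ?_, rfl⟩
    simp only [Finsupp.add_apply, Finsupp.single_apply, Fin.reduceEq, if_true, if_false] at hd
    omega

theorem fD_eq_indicatorSeries_union :
    fD = indicatorSeries ℤ (chainPartitions (Equiv.refl (Fin 4)) ∪
      (Finsupp.single 0 1 + Finsupp.single 2 1 + ·) '' chainPartitions (Equiv.swap 1 2)) := by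
  ext d
  rw [coeff_indicatorSeries, coeff_apply, fD]
  congr 1
  rw [forall_diamondLe_iff, Set.mem_union, mem_chainPartitions_refl_iff,
    mem_image_add_chainPartitions_swap_iff, eq_iff_iff]
  omega

theorem fD_eq_indicatorSeries_add :
    fD = indicatorSeries ℤ (chainPartitions (Equiv.refl (Fin 4))) +
      X 0 * X 2 * indicatorSeries ℤ (chainPartitions (Equiv.swap 1 2)) := by
  have hdisj : Disjoint (chainPartitions (Equiv.refl (Fin 4)))
      ((Finsupp.single 0 1 + Finsupp.single 2 1 + ·) '' chainPartitions (Equiv.swap 1 2)) := by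
    refine Set.disjoint_left.mpr fun d hrefl hswap => ?_
    rw [mem_chainPartitions_refl_iff] at hrefl
    rw [mem_image_add_chainPartitions_swap_iff] at hswap
    omega
  rw [fD_eq_indicatorSeries_union, indicatorSeries_union hdisj, indicatorSeries_image_add,
    X_def, X_def, monomial_mul_monomial, one_mul]

end Diamond

/-- `f_D (1-x₁)(1-x₁x₂)(1-x₁x₃)(1-x₁x₂x₃)(1-x₁x₂x₃x₄) = 1 - x₁²x₂x₃`. -/
theorem diamond_gf :
    fD * (1 - X 0) * (1 - X 0 * X 1) * (1 - X 0 * X 2) * (1 - X 0 * X 1 * X 2) *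
        (1 - X 0 * X 1 * X 2 * X 3) =
      1 - X 0 ^ 2 * X 1 * X 2 := by
  have hid := indicatorSeries_chainPartitions_fin_four (R := ℤ) (Equiv.refl (Fin 4))
  have hswap := indicatorSeries_chainPartitions_fin_four (R := ℤ) (Equiv.swap (1 : Fin 4) 2)
  simp only [Equiv.refl_apply, Equiv.swap_apply_left, Equiv.swap_apply_right,
    show Equiv.swap (1 : Fin 4) 2 0 = 0 from rfl, show Equiv.swap (1 : Fin 4) 2 3 = 3 from rfl]
    at hid hswap
  rw [fD_eq_indicatorSeries_add]
  linear_combination (1 - X 0 * X 2) * hid + X 0 * X 2 * (1 - X 0 * X 1) * hswap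
end

section
/- For n ≥ 3, the 2-rowed posets with double diagonals satisfy the recurrence (1 − x₁)(1 − x₁x₂)(1 − x₁x₃) · f_{P_n} = (1 − x₁²x₂x₃) · G, where G is obtained from f_{P_{n−1}} (a power series in variables y₁, ..., y_{2n−2} indexed by the elements of P_{n−1}) by substituting the monomial x₁x₂x₃ for y₁ and the variable x_{j+2} for y_j for each 2 ≤ j ≤ 2n−2; this is an identity of multivariate formal power series over ℤ in the variables x₁, ..., x_{2n}. -/
open MvPowerSeries

open Classical in
/-- The generating relations of the 2-rowed poset with double diagonals `P_n`,
on the labels `1, …, 2n` (as natural numbers): `1 < 2`, `1 < 3`;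
`2k < 2k+2`, `2k < 2k+3`, `2k+1 < 2k+2`, `2k+1 < 2k+3` for `1 ≤ k ≤ n-2`;
and `2n-2 < 2n`, `2n-1 < 2n`. -/
def prel (n : ℕ) (i j : ℕ) : Prop :=
  (i = 1 ∧ (j = 2 ∨ j = 3)) ∨
  (∃ k, 1 ≤ k ∧ k ≤ n - 2 ∧ (i = 2 * k ∨ i = 2 * k + 1) ∧
    (j = 2 * k + 2 ∨ j = 2 * k + 3)) ∨
  ((i = 2 * n - 2 ∨ i = 2 * n - 1) ∧ j = 2 * n)

/-- The order of `P_n` generated by the relations `prel n`. -/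
def pOrd (n : ℕ) : ℕ → ℕ → Prop := Relation.ReflTransGen (prel n)

open Classical in
/-- The generating function of `P_n`-partitions of `P_n`, as a series in the
variables `x_1, …, x_{2n}`: the coefficient at an exponent vector `d` is `1`
iff `d` is supported on `{1, …, 2n}` and is order-reversing. -/
noncomputable def fP (n : ℕ) : MvPowerSeries ℕ ℤ :=
  fun d => if (∀ m, m ∉ Finset.Icc 1 (2 * n) → d m = 0) ∧
      (∀ i j, pOrd n i j → d j ≤ d i) then 1 else 0

open Classical in
/-- The series obtained from `f_{P_{n-1}}` (a series in the variables
`y_1, …, y_{2n-2}`) by substituting the monomial `x₁x₂x₃` for `y₁` and the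
variable `x_{j+2}` for `y_j` for `2 ≤ j ≤ 2n-2`.  The substitution sends the
monomial `∏_j y_j^{d j}` to `(x₁x₂x₃)^{d 1} ∏_{j ≥ 2} x_{j+2}^{d j}`, so the
coefficient at an exponent vector `e` is `1` iff `e` is supported on
`{1, …, 2n}`, `e 1 = e 2 = e 3`, and the recovered exponent vector
(`d 1 = e 1`, `d j = e (j+2)` for `j ≠ 1`) is order-reversing for `P_{n-1}`. -/
noncomputable def fPsub (n : ℕ) : MvPowerSeries ℕ ℤ :=
  fun e => if (∀ m, m ∉ Finset.Icc 1 (2 * n) → e m = 0) ∧ e 1 = e 2 ∧ e 2 = e 3 ∧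
      (∀ i j, pOrd (n - 1) i j →
        (if j = 1 then e 1 else e (j + 2)) ≤ (if i = 1 then e 1 else e (i + 2)))
    then 1 else 0

/-!
A `P`-partition `d` loses a copy of the indicator of a down-set `I` and remains a `P`-partition
exactly when `d` is positive on `I` and strictly decreases along every relation leaving `I`.
So multiplying the generating function by `1 - ∏ i ∈ I, xᵢ` retains exactly the `P`-partitions
violating this condition.

For `I = {1}` these are the `d` with `d 1 = d 2` or `d 1 = d 3`. The case `d 1 = d 2` is the
same as imposing `2 ≤ 1` too, which makes `{1, 2}` a down-set, and the factor `1 - x₁x₂` then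
leaves the series `g` of the `d` with `d 1 = d 2 = d 3`; symmetrically for `1 - x₁x₃`.
Inclusion–exclusion gives, with `u = x₁x₂` and `v = x₁x₃`,
`(1 - u)(1 - v)(1 - x₁) f = ((1 - v) + (1 - u) - (1 - u)(1 - v)) g = (1 - uv) g`,
and deleting `1` and `2` identifies `g` with the substituted series.
-/

namespace TwoRowed

open scoped Pointwise

variable {α : Type*} {R : Type*}

section GenSeries

/-- The generating series of a set of exponent vectors: the sum of the corresponding monomials. -/
noncomputable def genSeries (R : Type*) [Semiring R] (S : Set (α →₀ ℕ)) : MvPowerSeries α R :=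
  S.indicator 1

lemma coeff_genSeries [Semiring R] (S : Set (α →₀ ℕ)) (d : α →₀ ℕ) :
    coeff d (genSeries R S) = S.indicator 1 d :=
  rfl

lemma genSeries_union_add_inter [Semiring R] (S T : Set (α →₀ ℕ)) :
    genSeries R (S ∪ T) + genSeries R (S ∩ T) = genSeries R S + genSeries R T :=
  Set.indicator_union_add_inter 1 S T

lemma genSeries_sdiff [Ring R] {S T : Set (α →₀ ℕ)} (h : T ⊆ S) :
    genSeries R (S \ T) = genSeries R S - genSeries R T :=
  Set.indicator_sdiff h 1

lemma monomial_mul_genSeries [Semiring R] (m : α →₀ ℕ) (S : Set (α →₀ ℕ)) :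
    monomial m 1 * genSeries R S = genSeries R (m +ᵥ S) := by
  classical
  ext d
  have mem_vadd : d ∈ m +ᵥ S ↔ m ≤ d ∧ d - m ∈ S := by
    refine Set.mem_vadd_set.trans ⟨?_, fun h => ⟨d - m, h.2, add_tsub_cancel_of_le h.1⟩⟩
    rintro ⟨e, he, rfl⟩
    simpa using he
  simp only [coeff_monomial_mul, coeff_genSeries, Set.indicator_apply, mem_vadd, ite_and, one_mul,
    Pi.one_apply]

end GenSeries

section Partitions

/-- The exponent vectors of the `P`-partitions, where `P` is the set `s` with the order generated
by `r`. The relation `r` need not be transitive or antisymmetric. -/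
def partitions (s : Set α) (r : α → α → Prop) : Set (α →₀ ℕ) :=
  {d | (∀ a, a ∉ s → d a = 0) ∧ ∀ a b, r a b → d b ≤ d a}

variable {s : Set α} {r : α → α → Prop}

lemma forall_reflTransGen_antitone_iff {β : Type*} [Preorder β] (g : α → β) :
    (∀ a b, Relation.ReflTransGen r a b → g b ≤ g a) ↔ ∀ a b, r a b → g b ≤ g a := by
  refine ⟨fun h a b hab => h a b (.single hab), fun h a b hab => ?_⟩
  induction hab with
  | refl => exact le_rfl
  | tail _ hbc ih => exact (h _ _ hbc).trans ih

lemma sep_eq_partitions {a b : α} (h : r a b) :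
    {d ∈ partitions s r | d a = d b} = partitions s fun x y => r x y ∨ x = b ∧ y = a := by
  ext d
  refine (and_assoc (c := d a = d b)).trans (and_congr_right fun _ => ⟨?_, fun hd => ⟨?_, ?_⟩⟩)
  · rintro ⟨anti, hab⟩ x y (hxy | ⟨rfl, rfl⟩)
    · exact anti x y hxy
    · exact hab.le
  · exact fun x y hxy => hd x y (.inl hxy)
  · exact (hd b a (.inr ⟨rfl, rfl⟩)).antisymm (hd a b (.inl h))

lemma mem_vadd_partitions {I : Finset α} (hIs : ↑I ⊆ s) (hI : ∀ a b, r a b → b ∈ I → a ∈ I)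
    (d : α →₀ ℕ) :
    d ∈ Finsupp.indicator I (fun _ _ => 1) +ᵥ partitions s r ↔
      d ∈ partitions s r ∧ (∀ a ∈ I, d a ≠ 0) ∧ ∀ a ∈ I, ∀ b ∉ I, r a b → d b < d a := by
  classical
  rw [Set.mem_vadd_set]
  constructor
  · rintro ⟨e, ⟨support_e, anti_e⟩, rfl⟩
    simp only [partitions, Set.mem_ofPred_eq, vadd_eq_add, Finsupp.add_apply,
      Finsupp.indicator_apply]
    refine ⟨⟨fun a ha => ?_, fun a b hab => ?_⟩, fun a ha => ?_, fun a ha b hb hab => ?_⟩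
    · simp [support_e a ha, show a ∉ I from fun h => ha (hIs h)]
    · have := hI a b hab
      have := anti_e a b hab
      grind
    · simp [ha]
    · have := anti_e a b hab
      simp only [ha, hb, dite_true, dite_false]
      omega
  · rintro ⟨⟨support_d, anti_d⟩, pos_d, strict_d⟩
    refine ⟨d - Finsupp.indicator I fun _ _ => 1, ⟨fun a ha => ?_, fun a b hab => ?_⟩,
      add_tsub_cancel_of_le fun a => ?_⟩
    · simp [support_d a ha]
    · have := anti_d a b hab
      have := strict_d a
      simp only [Finsupp.tsub_apply, Finsupp.indicator_apply]
      grind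
    · have := pos_d a
      simp only [Finsupp.indicator_apply]
      grind

lemma one_sub_prod_X_mul_genSeries_partitions [CommRing R] {I : Finset α} (hIs : ↑I ⊆ s)
    (hI : ∀ a b, r a b → b ∈ I → a ∈ I) :
    (1 - ∏ a ∈ I, X a) * genSeries R (partitions s r) =
      genSeries R {d ∈ partitions s r |
        (∃ a ∈ I, d a = 0) ∨ ∃ a ∈ I, ∃ b ∉ I, r a b ∧ d a ≤ d b} := by
  have prod_X : ∏ a ∈ I, X a = monomial (Finsupp.indicator I fun _ _ => 1) (1 : R) := by
    simp only [X_def, prod_monomial, Finset.prod_const_one, Finsupp.indicator_eq_sum_single]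
  rw [prod_X, sub_mul, one_mul, monomial_mul_genSeries,
    ← genSeries_sdiff fun d hd => ((mem_vadd_partitions hIs hI d).1 hd).1]
  congr 1
  ext d
  rw [Set.mem_sdiff, mem_vadd_partitions hIs hI]
  simp only [Set.mem_ofPred_eq]
  grind

end Partitions

section TwinBase

/-- `a` is a minimal element with upper covers `b` and `c`, which are twins: both cover only `a`,
and they have the same upper covers. Covers are read off the generating relation `r`. -/
structure IsTwinBase (r : α → α → Prop) (a b c : α) : Prop where
  ne : b ≠ c
  not_rel_base : ∀ x, ¬ r x a
  base_rel_iff : ∀ x, r a x ↔ x = b ∨ x = c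
  rel_left_iff : ∀ x, r x b ↔ x = a
  rel_right_iff : ∀ x, r x c ↔ x = a
  left_rel_iff : ∀ x, r b x ↔ r c x

namespace IsTwinBase

variable {s : Set α} {r : α → α → Prop} {a b c : α}

lemma symm (h : IsTwinBase r a b c) : IsTwinBase r a c b where
  ne := h.ne.symm
  not_rel_base := h.not_rel_base
  base_rel_iff x := (h.base_rel_iff x).trans or_comm
  rel_left_iff := h.rel_right_iff
  rel_right_iff := h.rel_left_iff
  left_rel_iff x := (h.left_rel_iff x).symm

lemma base_rel_left (h : IsTwinBase r a b c) : r a b :=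
  (h.base_rel_iff b).2 (.inl rfl)

lemma base_rel_right (h : IsTwinBase r a b c) : r a c :=
  h.symm.base_rel_left

lemma base_ne_left (h : IsTwinBase r a b c) : a ≠ b :=
  fun hab => h.not_rel_base a (by simpa [← hab] using h.base_rel_left)

lemma base_ne_right (h : IsTwinBase r a b c) : a ≠ c :=
  h.symm.base_ne_left

lemma one_sub_base_mul_genSeries [CommRing R] (h : IsTwinBase r a b c) (ha : a ∈ s) :
    (1 - X a) * genSeries R (partitions s r) =
      genSeries R ({d ∈ partitions s r | d a = d b} ∪ {d ∈ partitions s r | d a = d c}) := by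
  have down_set (x y : α) (hxy : r x y) (hy : y ∈ ({a} : Finset α)) : x ∈ ({a} : Finset α) := by
    obtain rfl := Finset.mem_singleton.1 hy
    exact absurd hxy (h.not_rel_base x)
  have key := one_sub_prod_X_mul_genSeries_partitions (R := R) (s := s) (by simpa using ha) down_set
  rw [Finset.prod_singleton] at key
  rw [key]
  congr 1
  ext d
  rw [← Set.sep_or]
  refine and_congr_right fun hd => ?_
  have hb := hd.2 a b h.base_rel_left
  have hc := hd.2 a c h.base_rel_right
  have := h.base_ne_left
  have := h.base_ne_right
  simp only [Finset.mem_singleton, exists_eq_left, h.base_rel_iff]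
  grind

lemma one_sub_base_mul_left_mul_genSeries [CommRing R] (h : IsTwinBase r a b c)
    (ha : a ∈ s) (hb : b ∈ s) :
    (1 - X a * X b) * genSeries R {d ∈ partitions s r | d a = d b} =
      genSeries R {d ∈ partitions s r | d a = d b ∧ d a = d c} := by
  classical
  have down_set (x y : α) (hxy : r x y ∨ x = b ∧ y = a) (hy : y ∈ ({a, b} : Finset α)) :
      x ∈ ({a, b} : Finset α) := by
    have := h.not_rel_base x
    have := h.rel_left_iff x
    grind
  have key := one_sub_prod_X_mul_genSeries_partitions (R := R) (s := s)
    (by simp [Set.insert_subset_iff, ha, hb]) down_set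
  rw [Finset.prod_pair h.base_ne_left, ← sep_eq_partitions h.base_rel_left] at key
  rw [key]
  congr 1
  ext d
  rw [Set.mem_sep_iff, Set.mem_sep_iff, Set.mem_sep_iff, and_assoc]
  refine and_congr_right fun hd => and_congr_right fun hab => ?_
  have hc : d c ≤ d a := hd.2 a c h.base_rel_right
  constructor
  · rintro (⟨x, hx, hx0⟩ | ⟨x, hx, y, hy, hxy, hle⟩)
    · obtain rfl | rfl : x = a ∨ x = b := by simpa using hx
      all_goals omega
    · obtain ⟨hya, hyb⟩ : y ≠ a ∧ y ≠ b := by simpa using hy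
      replace hxy : r x y := hxy.resolve_right fun h => hya h.2
      obtain rfl | rfl : x = a ∨ x = b := by simpa using hx
      · obtain rfl : y = c := ((h.base_rel_iff y).1 hxy).resolve_left hyb
        exact hle.antisymm hc
      · have hyc : d y ≤ d c := hd.2 c y ((h.left_rel_iff y).1 hxy)
        omega
  · intro hac
    exact .inr ⟨a, by simp, c, by simp [h.base_ne_right.symm, h.ne.symm],
      .inl h.base_rel_right, hac.le⟩

theorem genSeries_recurrence [CommRing R] (h : IsTwinBase r a b c)
    (ha : a ∈ s) (hb : b ∈ s) (hc : c ∈ s) :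
    (1 - X a) * (1 - X a * X b) * (1 - X a * X c) * genSeries R (partitions s r) =
      (1 - X a ^ 2 * X b * X c) * genSeries R {d ∈ partitions s r | d a = d b ∧ d a = d c} := by
  have base := h.one_sub_base_mul_genSeries (R := R) ha
  have left := h.one_sub_base_mul_left_mul_genSeries (R := R) ha hb
  have right := h.symm.one_sub_base_mul_left_mul_genSeries (R := R) ha hc
  have inclusion_exclusion := genSeries_union_add_inter (R := R)
    {d ∈ partitions s r | d a = d b} {d ∈ partitions s r | d a = d c}
  rw [Set.sep_and] at left right ⊢
  rw [Set.inter_comm] at right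
  linear_combination (1 - X a * X b) * (1 - X a * X c) * (base + inclusion_exclusion)
    + (1 - X a * X c) * left + (1 - X a * X b) * right

end IsTwinBase

end TwinBase

section TwoRowedPoset

lemma prel_iff_div_two (n i j : ℕ) :
    prel n i j ↔ (i = 1 ∧ j / 2 = 1) ∨ (1 ≤ i / 2 ∧ i / 2 ≤ n - 2 ∧ j / 2 = i / 2 + 1) ∨
      ((i = 2 * n - 2 ∨ i = 2 * n - 1) ∧ j = 2 * n) := by
  refine or_congr (by omega) (or_congr ⟨?_, fun h => ⟨i / 2, by omega⟩⟩ Iff.rfl)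
  rintro ⟨k, hk⟩
  omega

lemma isTwinBase_prel {n : ℕ} (hn : 2 ≤ n) : IsTwinBase (prel n) 1 2 3 where
  ne := by decide
  not_rel_base x := by rw [prel_iff_div_two]; omega
  base_rel_iff x := by rw [prel_iff_div_two]; omega
  rel_left_iff x := by rw [prel_iff_div_two]; omega
  rel_right_iff x := by rw [prel_iff_div_two]; omega
  left_rel_iff x := by rw [prel_iff_div_two, prel_iff_div_two]; omega

lemma prel_add_two_iff {n i j : ℕ} (hn : 3 ≤ n) (hi : 1 ≤ i) :
    prel n (i + 2) (j + 2) ↔ prel (n - 1) i j := by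
  rw [prel_iff_div_two, prel_iff_div_two]
  omega

lemma forall_prel_antitone_iff_add_two {β : Type*} [Preorder β] {n : ℕ} (hn : 3 ≤ n) {g : ℕ → β}
    (h12 : g 1 = g 2) (h13 : g 1 = g 3) :
    (∀ i j, prel n i j → g j ≤ g i) ↔ ∀ i j, prel (n - 1) i j → g (j + 2) ≤ g (i + 2) := by
  have twins := isTwinBase_prel (show 2 ≤ n by omega)
  constructor
  · intro anti i j hij
    have hi : 1 ≤ i := by rw [prel_iff_div_two] at hij; omega
    exact anti _ _ ((prel_add_two_iff hn hi).2 hij)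
  · intro anti i j hij
    have anti_of_three_le (k : ℕ) (hk : 3 ≤ k) (hkj : prel n k j) : g j ≤ g k := by
      have hj : 2 ≤ j := by rw [prel_iff_div_two] at hkj; omega
      obtain ⟨k, rfl⟩ := Nat.exists_eq_add_of_le' (show 2 ≤ k by omega)
      obtain ⟨j, rfl⟩ := Nat.exists_eq_add_of_le' hj
      exact anti k j ((prel_add_two_iff hn (by omega)).1 hkj)
    obtain rfl | rfl | hi : i = 1 ∨ i = 2 ∨ 3 ≤ i := by rw [prel_iff_div_two] at hij; omega
    · obtain rfl | rfl := (twins.base_rel_iff j).1 hij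
      exacts [h12.ge, h13.ge]
    · rw [← h12, h13]
      exact anti_of_three_le 3 le_rfl ((twins.left_rel_iff j).1 hij)
    · exact anti_of_three_le i hi hij

lemma fP_eq_genSeries (n : ℕ) : fP n = genSeries ℤ (partitions (Set.Icc 1 (2 * n)) (prel n)) := by
  classical
  funext d
  simp [fP, genSeries, partitions, Set.indicator_apply, pOrd, forall_reflTransGen_antitone_iff]

lemma fPsub_eq_genSeries {n : ℕ} (hn : 3 ≤ n) :
    fPsub n =
      genSeries ℤ {d ∈ partitions (Set.Icc 1 (2 * n)) (prel n) | d 1 = d 2 ∧ d 1 = d 3} := by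
  classical
  funext e
  rw [genSeries, Set.indicator_apply]
  refine if_congr ?_ rfl rfl
  simp only [pOrd, partitions, Set.mem_ofPred_eq, Finset.mem_Icc, Set.mem_Icc, and_assoc]
  rw [forall_reflTransGen_antitone_iff fun i => if i = 1 then e 1 else e (i + 2)]
  have eq_chain : (e 1 = e 2 ∧ e 2 = e 3) ↔ e 1 = e 2 ∧ e 1 = e 3 := by omega
  rw [← and_assoc (a := e 1 = e 2), eq_chain]
  refine and_congr_right fun _ => (and_congr_right fun ⟨h12, h13⟩ => ?_).trans and_comm
  have substituted_apply (i : ℕ) : (if i = 1 then e 1 else e (i + 2)) = e (i + 2) := by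
    split_ifs with hi <;> simp [hi, h13]
  simp only [substituted_apply, forall_prel_antitone_iff_add_two hn h12 h13]

end TwoRowedPoset

end TwoRowed

/-- The recurrence for the 2-rowed posets with double diagonals:
`(1-x₁)(1-x₁x₂)(1-x₁x₃) f_{P_n} = (1-x₁²x₂x₃) f_{P_{n-1}}(x₁x₂x₃,x₄,…,x_{2n})`. -/
theorem two_rowed_recurrence (n : ℕ) (hn : 3 ≤ n) :
    (1 - X 1) * (1 - X 1 * X 2) * (1 - X 1 * X 3) * fP n =
      (1 - X 1 ^ 2 * X 2 * X 3) * fPsub n := by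
  have twins := TwoRowed.isTwinBase_prel (show 2 ≤ n by omega)
  rw [TwoRowed.fP_eq_genSeries, TwoRowed.fPsub_eq_genSeries hn]
  apply twins.genSeries_recurrence <;> rw [Set.mem_Icc] <;> omega
end
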